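/- arXiv:1403.4685 — 2 statements merged into one kernel-verified Lean document; each statement's English description precedes it below -/
import Mathlib

section
/- Let p be a prime, F a field of characteristic p, and r, s positive integers. Suppose the Kronecker product J_r ⊗ J_s is similar over F to the block-diagonal matrix consisting, for each 1 ≤ i ≤ t, of exactly m_i ≥ 1 diagonal blocks equal to J_{μ_i}, where μ_1 > ⋯ > μ_t > 0. Then for every 1 ≤ i ≤ t one has μ_i = r + s − m_i − 2·Σ_{j=1}^{i−1} m_j. -/
/-! Put `N = J_r ⊗ J_s - 1`. Column vectors are viewed as functions on `ℕ × ℕ` supported in the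
rectangle `[0, r) × [0, s)`; there `J_r - 1` and `J_s - 1` become the two coordinate shifts `X`
and `Y`, so that `N = X + Y (1 + X)`. The substitution `twist` conjugates `N` to `Z = X + Y`,
which is homogeneous for the grading by `i + j`.

For `k ≥ 0` let `K_k = ker Z ∩ im Z ^ k`. Its dimension is the number of Jordan blocks of size
greater than `k` (`finrank_socle_eq_card`). On the other hand `ker Z` has a basis `κ_0, κ_1, …`
with `κ_e` homogeneous of degree `e` and `X κ_{e+1} = κ_e`; since `K_k` is graded and stable
under `X`, it is spanned by `κ_0, …, κ_{g-1}`, where `g = dim K_k` (`kappa_mem_iff_lt`).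

The bilinear form `∑ θ(i, j) ψ(r - 1 - i, s - 1 - j)` is nondegenerate, and `Z` is self-adjoint
for it. It yields the symmetry `kappa_symm`: if `κ_e` lies in `K_k` but not in `K_{k+1}`, then so
does `κ_{e'}` with `e + e' = r + s - 2 - k`. For `k + 1 = μ_i` the indices `e` in question form the
interval `[a, a + m_i)` with `a = ∑_{j<i} m_j`, and this interval must be invariant under the
reflection, so `2 a + m_i - 1 = r + s - 1 - μ_i`. -/

open Kronecker

/-- The `m × m` Jordan block with eigenvalue `1`: ones on the main diagonal and the
superdiagonal, zeros elsewhere. -/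
def jordanBlock (F : Type*) [Zero F] [One F] (m : ℕ) : Matrix (Fin m) (Fin m) F :=
  Matrix.of fun i j => if (j : ℕ) = (i : ℕ) ∨ (j : ℕ) = (i : ℕ) + 1 then 1 else 0

/-- The block-diagonal matrix whose diagonal blocks are the Jordan blocks `J_{d i}`, `i : ι`. -/
def jordanBlockDiag (F : Type*) [Field F] {ι : Type} [DecidableEq ι] (d : ι → ℕ) :
    Matrix ((i : ι) × Fin (d i)) ((i : ι) × Fin (d i)) F :=
  Matrix.blockDiagonal' fun i => jordanBlock F (d i)

/-- Similarity of square matrices, possibly indexed by different (finite) types: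
both matrices represent the same linear endomorphism up to a linear change of basis. -/
def MatSimilar (F : Type*) [Field F] {n m : Type*} [Fintype n] [Fintype m]
    (A : Matrix n n F) (B : Matrix m m F) : Prop :=
  ∃ e : (n → F) ≃ₗ[F] (m → F), ∀ v, e (A.mulVec v) = B.mulVec (e v)

namespace JordanTensor

variable {F : Type*} [Field F]

/-! ### Shift operators on functions on the quadrant -/

/-- The shift of the first coordinate, `(X φ)(i, j) = φ(i + 1, j)`. -/
def shX : Module.End F (ℕ → ℕ → F) where
  toFun φ := fun i j => φ (i + 1) j
  map_add' _ _ := rfl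
  map_smul' _ _ := rfl

/-- The shift of the second coordinate, `(Y φ)(i, j) = φ(i, j + 1)`. -/
def shY : Module.End F (ℕ → ℕ → F) where
  toFun φ := fun i j => φ i (j + 1)
  map_add' _ _ := rfl
  map_smul' _ _ := rfl

/-- The operator `Z = X + Y`. -/
def shZ : Module.End F (ℕ → ℕ → F) := shX + shY

@[simp] lemma shX_apply (φ : ℕ → ℕ → F) (i j : ℕ) : shX φ i j = φ (i + 1) j := rfl
@[simp] lemma shY_apply (φ : ℕ → ℕ → F) (i j : ℕ) : shY φ i j = φ i (j + 1) := rfl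
@[simp] lemma shZ_apply (φ : ℕ → ℕ → F) (i j : ℕ) :
    shZ φ i j = φ (i + 1) j + φ i (j + 1) := rfl

lemma shX_comm_shZ : Commute (shX : Module.End F (ℕ → ℕ → F)) shZ := by
  ext φ i j
  simp

/-- The functions supported in the rectangle `[0, r) × [0, s)`. -/
def rect (F : Type*) [Field F] (r s : ℕ) : Submodule F (ℕ → ℕ → F) where
  carrier := {φ | ∀ i j, ¬ (i < r ∧ j < s) → φ i j = 0}
  zero_mem' _ _ _ := rfl
  add_mem' := by
    intro a b ha hb i j h
    simp [ha i j h, hb i j h]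
  smul_mem' := by
    intro c a ha i j h
    simp [ha i j h]

lemma mem_rect {r s : ℕ} {φ : ℕ → ℕ → F} :
    φ ∈ rect F r s ↔ ∀ i j, ¬ (i < r ∧ j < s) → φ i j = 0 := Iff.rfl

lemma shX_mem {r s : ℕ} {φ : ℕ → ℕ → F} (h : φ ∈ rect F r s) : shX φ ∈ rect F r s :=
  fun i j hij => h _ _ (by omega)

lemma shY_mem {r s : ℕ} {φ : ℕ → ℕ → F} (h : φ ∈ rect F r s) : shY φ ∈ rect F r s :=
  fun i j hij => h _ _ (by omega)

lemma shZ_mem {r s : ℕ} {φ : ℕ → ℕ → F} (h : φ ∈ rect F r s) : shZ φ ∈ rect F r s :=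
  (rect F r s).add_mem (shX_mem h) (shY_mem h)

lemma shZ_pow_mem {r s : ℕ} {φ : ℕ → ℕ → F} (h : φ ∈ rect F r s) (k : ℕ) :
    (shZ ^ k) φ ∈ rect F r s := by
  induction k with
  | zero => simpa using h
  | succ k ih => rw [pow_succ', Module.End.mul_apply]; exact shZ_mem ih

/-! ### The grading -/

/-- The projection onto the homogeneous component of degree `e`: restriction to the
antidiagonal `i + j = e`. -/
def proj (e : ℕ) (φ : ℕ → ℕ → F) : ℕ → ℕ → F := fun i j => if i + j = e then φ i j else 0

lemma proj_mem {r s : ℕ} {φ : ℕ → ℕ → F} (h : φ ∈ rect F r s) (e : ℕ) :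
    proj e φ ∈ rect F r s := by
  intro i j hij
  simp [proj, h i j hij]

lemma proj_shZ (e : ℕ) (φ : ℕ → ℕ → F) : proj e (shZ φ) = shZ (proj (e + 1) φ) := by
  funext i j
  have h1 : (i + 1 + j = e + 1) ↔ i + j = e := by omega
  have h2 : (i + (j + 1) = e + 1) ↔ i + j = e := by omega
  simp only [proj, shZ_apply, h1, h2]
  split_ifs <;> simp

lemma proj_shZ_pow (k e : ℕ) (φ : ℕ → ℕ → F) :
    proj e ((shZ ^ k) φ) = (shZ ^ k) (proj (e + k) φ) := by
  induction k generalizing e with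
  | zero => simp
  | succ k ih =>
    rw [pow_succ', Module.End.mul_apply, Module.End.mul_apply, proj_shZ, ih]
    congr 3
    omega

/-- The homogeneous element of degree `e` of `ker Z`, normalised to be `1` at `(e, 0)`. -/
def kappa (F : Type*) [Field F] (e : ℕ) : ℕ → ℕ → F :=
  fun i j => if i + j = e then (-1) ^ j else 0

lemma shZ_kappa (e : ℕ) : shZ (kappa F e) = 0 := by
  funext i j
  have h1 : (i + 1 + j = e) ↔ i + (j + 1) = e := by omega
  simp only [kappa, shZ_apply, h1]
  split_ifs <;> simp [pow_succ]

lemma shX_kappa (e : ℕ) : shX (kappa F (e + 1)) = kappa F e := by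
  funext i j
  have h1 : (i + 1 + j = e + 1) ↔ i + j = e := by omega
  simp only [kappa, shX_apply, h1]

lemma proj_kappa (e : ℕ) : proj e (kappa F e) = kappa F e := by
  funext i j
  simp only [proj, kappa]
  split_ifs <;> simp

lemma kappa_ne_zero (e : ℕ) : kappa F e ≠ 0 := by
  intro h
  have := congrFun (congrFun h e) 0
  simp [kappa] at this

lemma apply_of_shZ_eq_zero {φ : ℕ → ℕ → F} (h : shZ φ = 0) (i j : ℕ) :
    φ i j = (-1) ^ j * φ (i + j) 0 := by
  induction j generalizing i with
  | zero => simp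
  | succ j ih =>
    have h1 := congrFun (congrFun h i) j
    simp only [shZ_apply, Pi.zero_apply] at h1
    have h2 := ih (i + 1)
    rw [show i + 1 + j = i + (j + 1) by omega] at h2
    rw [pow_succ]
    linear_combination h1 - h2

lemma proj_of_shZ_eq_zero {φ : ℕ → ℕ → F} (h : shZ φ = 0) (e : ℕ) :
    proj e φ = φ e 0 • kappa F e := by
  funext i j
  simp only [proj, kappa, Pi.smul_apply, smul_eq_mul]
  split_ifs with hij
  · rw [apply_of_shZ_eq_zero h i j, hij, mul_comm]
  · simp

/-! ### The graded pieces of the socle filtration -/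

/-- The space `K_k = ker Z ∩ im Z ^ k`, for `Z` acting on the functions supported in the
rectangle. -/
def socle (F : Type*) [Field F] (r s k : ℕ) : Submodule F (ℕ → ℕ → F) :=
  (rect F r s ⊓ LinearMap.ker shZ) ⊓ (rect F r s).map (shZ ^ k)

lemma mem_socle {r s k : ℕ} {φ : ℕ → ℕ → F} : φ ∈ socle F r s k ↔
    (φ ∈ rect F r s ∧ shZ φ = 0) ∧ ∃ ψ ∈ rect F r s, (shZ ^ k) ψ = φ := by
  simp [socle]

/-- `K_k` is a graded subspace of `ker Z`. -/
lemma kappa_mem_of_apply_ne_zero {r s k e : ℕ} {φ : ℕ → ℕ → F} (h : φ ∈ socle F r s k)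
    (he : φ e 0 ≠ 0) : kappa F e ∈ socle F r s k := by
  obtain ⟨⟨hφ, hZ⟩, ψ, hψ, rfl⟩ := mem_socle.1 h
  have hp := proj_of_shZ_eq_zero hZ e
  have hk : kappa F e = (((shZ ^ k) ψ) e 0)⁻¹ • proj e ((shZ ^ k) ψ) := by
    rw [hp, smul_smul, inv_mul_cancel₀ he, one_smul]
  refine mem_socle.2 ⟨⟨?_, shZ_kappa e⟩, _, Submodule.smul_mem _ (((shZ ^ k) ψ) e 0)⁻¹
    (proj_mem hψ (e + k)), ?_⟩
  · rw [hk]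
    exact Submodule.smul_mem _ _ (proj_mem hφ e)
  · rw [map_smul, ← proj_shZ_pow, ← hk]

lemma kappa_mem_of_succ {r s k e : ℕ} (h : kappa F (e + 1) ∈ socle F r s k) :
    kappa F e ∈ socle F r s k := by
  obtain ⟨⟨hφ, hZ⟩, ψ, hψ, hk⟩ := mem_socle.1 h
  refine mem_socle.2 ⟨⟨?_, shZ_kappa e⟩, shX ψ, shX_mem hψ, ?_⟩
  · rw [← shX_kappa]
    exact shX_mem hφ
  · rw [← shX_kappa, ← hk]
    exact (LinearMap.congr_fun (shX_comm_shZ.pow_right k).eq ψ).symm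

lemma kappa_mem_of_le {r s k e e' : ℕ} (h : kappa F e ∈ socle F r s k) (hle : e' ≤ e) :
    kappa F e' ∈ socle F r s k :=
  Nat.decreasingInduction (motive := fun n _ => kappa F n ∈ socle F r s k)
    (fun _ _ => kappa_mem_of_succ) h hle

lemma linearIndependent_kappa : LinearIndependent F (kappa F) := by
  rw [linearIndependent_iff']
  intro t c hc e he
  have := congrFun (congrFun hc e) 0
  simpa [Finset.sum_apply, kappa, he] using this

lemma lt_of_kappa_mem {r s k e : ℕ} (h : kappa F e ∈ socle F r s k) : e < r := by
  by_contra hlt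
  have := (mem_socle.1 h).1.1 e 0 (by omega)
  simp [kappa] at this

lemma socle_eq_span (r s k : ℕ) :
    socle F r s k = Submodule.span F (kappa F '' {e | kappa F e ∈ socle F r s k}) := by
  apply le_antisymm
  · intro φ h
    obtain ⟨⟨hφ, hZ⟩, -⟩ := mem_socle.1 h
    have hsum : φ = ∑ e ∈ Finset.range (r + s), φ e 0 • kappa F e := by
      funext i j
      simp only [Finset.sum_apply, Pi.smul_apply, smul_eq_mul, kappa, mul_ite, mul_zero,
        Finset.sum_ite_eq, Finset.mem_range]
      split_ifs with hij
      · rw [apply_of_shZ_eq_zero hZ i j, mul_comm]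
      · exact hφ i j (by omega)
    rw [hsum]
    refine Submodule.sum_mem _ fun e _ => ?_
    by_cases he : φ e 0 = 0
    · simp [he]
    · exact Submodule.smul_mem _ _
        (Submodule.subset_span ⟨e, kappa_mem_of_apply_ne_zero h he, rfl⟩)
  · rw [Submodule.span_le]
    rintro _ ⟨e, he, rfl⟩
    exact he

lemma kappa_mem_iff_lt (r s k e : ℕ) :
    kappa F e ∈ socle F r s k ↔ e < Module.finrank F (socle F r s k) := by
  classical
  set L : Finset ℕ := (Finset.range r).filter fun e => kappa F e ∈ socle F r s k with hL
  have hLmem : ∀ e, e ∈ L ↔ kappa F e ∈ socle F r s k := by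
    intro e
    simp only [hL, Finset.mem_filter, Finset.mem_range]
    exact ⟨fun h => h.2, fun h => ⟨lt_of_kappa_mem h, h⟩⟩
  have hfin : Module.finrank F (socle F r s k) = L.card := by
    have hset : {e | kappa F e ∈ socle F r s k} = (L : Set ℕ) := by
      ext e
      simp [hLmem]
    rw [socle_eq_span, hset, Set.image_eq_range]
    have := finrank_span_eq_card (R := F)
      (linearIndependent_kappa (F := F) |>.comp (fun x : (L : Set ℕ) => (x : ℕ))
        Subtype.val_injective)
    simpa [Function.comp_def] using this
  rw [hfin, ← hLmem]
  constructor
  · intro he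
    have hsub : Finset.range (e + 1) ⊆ L := by
      intro x hx
      rw [hLmem] at he ⊢
      exact kappa_mem_of_le he (by simpa [Nat.lt_succ_iff] using hx)
    simpa using Finset.card_le_card hsub
  · intro he
    by_contra hne
    have hsub : L ⊆ Finset.range e := by
      intro x hx
      rw [Finset.mem_range]
      by_contra hxe
      rw [hLmem] at hx hne
      exact hne (kappa_mem_of_le hx (by omega))
    have := Finset.card_le_card hsub
    simp at this
    omega

/-! ### Duality -/

/-- The bilinear form `∑ θ(i, j) ψ(R - i, S - j)` over the rectangle `[0, R] × [0, S]`. -/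
def form (R S : ℕ) (θ ψ : ℕ → ℕ → F) : F :=
  ∑ i ∈ Finset.range (R + 1), ∑ j ∈ Finset.range (S + 1), θ i j * ψ (R - i) (S - j)

lemma form_add_left (R S : ℕ) (a b ψ : ℕ → ℕ → F) :
    form R S (a + b) ψ = form R S a ψ + form R S b ψ := by
  simp [form, add_mul, Finset.sum_add_distrib]

lemma form_add_right (R S : ℕ) (θ a b : ℕ → ℕ → F) :
    form R S θ (a + b) = form R S θ a + form R S θ b := by
  simp [form, mul_add, Finset.sum_add_distrib]

lemma sum_shift (n : ℕ) (a b : ℕ → F) (ha : a (n + 1) = 0) (hb : b (n + 1) = 0) :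
    ∑ i ∈ Finset.range (n + 1), a (i + 1) * b (n - i) =
      ∑ i ∈ Finset.range (n + 1), a i * b (n - i + 1) := by
  rw [Finset.sum_range_succ, Finset.sum_range_succ' (fun i => a i * b (n - i + 1))]
  simp only [ha, hb, Nat.sub_zero, zero_mul, mul_zero, add_zero]
  refine Finset.sum_congr rfl fun i hi => ?_
  rw [Finset.mem_range] at hi
  rw [show n - (i + 1) + 1 = n - i by omega]

lemma form_shZ {R S : ℕ} {θ ψ : ℕ → ℕ → F} (hθ : θ ∈ rect F (R + 1) (S + 1))
    (hψ : ψ ∈ rect F (R + 1) (S + 1)) : form R S (shZ θ) ψ = form R S θ (shZ ψ) := by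
  have hX : form R S (shX θ) ψ = form R S θ (shX ψ) := by
    unfold form
    rw [Finset.sum_comm, Finset.sum_comm (f := fun i j => θ i j * shX ψ (R - i) (S - j))]
    refine Finset.sum_congr rfl fun j _ => ?_
    exact sum_shift R (fun i => θ i j) (fun i => ψ i (S - j))
      (hθ _ _ (by omega)) (hψ _ _ (by omega))
  have hY : form R S (shY θ) ψ = form R S θ (shY ψ) := by
    unfold form
    refine Finset.sum_congr rfl fun i _ => ?_
    exact sum_shift S (fun j => θ i j) (fun j => ψ (R - i) j)
      (hθ _ _ (by omega)) (hψ _ _ (by omega))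
  rw [shZ, LinearMap.add_apply, LinearMap.add_apply, form_add_left, form_add_right, hX, hY]

lemma form_shZ_pow {R S : ℕ} {θ ψ : ℕ → ℕ → F} (hθ : θ ∈ rect F (R + 1) (S + 1))
    (hψ : ψ ∈ rect F (R + 1) (S + 1)) (k : ℕ) :
    form R S ((shZ ^ k) θ) ψ = form R S θ ((shZ ^ k) ψ) := by
  induction k generalizing θ with
  | zero => simp
  | succ k ih =>
    rw [pow_succ, Module.End.mul_apply, ih (shZ_mem hθ), ← pow_succ, pow_succ',
      Module.End.mul_apply, form_shZ hθ (shZ_pow_mem hψ k)]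

/-- The form pairs degree `e` with degree `R + S - e`. -/
lemma form_proj {R S e e' : ℕ} (h : e + e' = R + S) (θ ψ : ℕ → ℕ → F) :
    form R S (proj e θ) ψ = form R S θ (proj e' ψ) := by
  unfold form
  refine Finset.sum_congr rfl fun i hi => Finset.sum_congr rfl fun j hj => ?_
  rw [Finset.mem_range] at hi hj
  have : (R - i + (S - j) = e') ↔ i + j = e := by omega
  simp only [proj, this]
  split_ifs <;> simp

/-- The indicator function of a point. -/
def delta (F : Type*) [Field F] (a b : ℕ) : ℕ → ℕ → F :=
  fun i j => if i = a ∧ j = b then 1 else 0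

lemma form_delta {R S a b : ℕ} (ha : a ≤ R) (hb : b ≤ S) (ψ : ℕ → ℕ → F) :
    form R S (delta F a b) ψ = ψ (R - a) (S - b) := by
  unfold form delta
  rw [Finset.sum_eq_single a, Finset.sum_eq_single b]
  · simp
  · intro j _ hj
    simp [hj]
  · intro h
    simp at h
    omega
  · intro i _ hi
    simp [hi]
  · intro h
    simp at h
    omega

lemma eq_sum_delta {R S : ℕ} {θ : ℕ → ℕ → F} (hθ : θ ∈ rect F (R + 1) (S + 1)) :
    θ = ∑ i ∈ Finset.range (R + 1), ∑ j ∈ Finset.range (S + 1), θ i j • delta F i j := by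
  funext a b
  simp only [Finset.sum_apply, Pi.smul_apply, smul_eq_mul, delta]
  by_cases h : a < R + 1 ∧ b < S + 1
  · rw [Finset.sum_eq_single a, Finset.sum_eq_single b]
    · simp
    · intro j _ hj
      simp [hj.symm]
    · intro h'
      simp at h'
      omega
    · intro i _ hi
      simp [hi.symm]
    · intro h'
      simp at h'
      omega
  · rw [hθ a b h]
    symm
    refine Finset.sum_eq_zero fun i hi => Finset.sum_eq_zero fun j hj => ?_
    rw [Finset.mem_range] at hi hj
    have : ¬ (a = i ∧ b = j) := by omega
    simp [this]

/-- Every linear functional on the functions supported in the rectangle is given by the form. -/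
lemma exists_form_eq (R S : ℕ) (lam : (ℕ → ℕ → F) →ₗ[F] F) :
    ∃ ψ ∈ rect F (R + 1) (S + 1), ∀ θ ∈ rect F (R + 1) (S + 1), lam θ = form R S θ ψ := by
  refine ⟨fun i j => if i < R + 1 ∧ j < S + 1 then lam (delta F (R - i) (S - j)) else 0,
    fun i j hij => if_neg hij, fun θ hθ => ?_⟩
  conv_lhs => rw [eq_sum_delta hθ]
  simp only [map_sum, map_smul, smul_eq_mul, form]
  refine Finset.sum_congr rfl fun i hi => Finset.sum_congr rfl fun j hj => ?_
  rw [Finset.mem_range] at hi hj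
  rw [if_pos (by omega), show R - (R - i) = i by omega, show S - (S - j) = j by omega]

lemma delta_mem {R S a b : ℕ} (ha : a ≤ R) (hb : b ≤ S) :
    delta F a b ∈ rect F (R + 1) (S + 1) := by
  intro i j hij
  have : ¬ (i = a ∧ j = b) := by omega
  simp [delta, this]

lemma eq_zero_of_form {R S : ℕ} {ψ : ℕ → ℕ → F} (hψ : ψ ∈ rect F (R + 1) (S + 1))
    (h : ∀ θ ∈ rect F (R + 1) (S + 1), form R S θ ψ = 0) : ψ = 0 := by
  funext i j
  by_cases hij : i < R + 1 ∧ j < S + 1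
  · have := h (delta F (R - i) (S - j)) (delta_mem (by omega) (by omega))
    rwa [form_delta (by omega) (by omega), show R - (R - i) = i by omega,
      show S - (S - j) = j by omega] at this
  · exact hψ i j hij

/-- Degrees of the basis vectors of `K_k` outside `K_{k+1}` are symmetric. With
`κ_e = Z ^ k φ`, some `ψ ∈ ker Z ^ (k + 1)` pairs nontrivially with `κ_e`; the vector
`Z ^ k ψ ∈ K_k` then has a nonzero component in the complementary degree. -/
lemma kappa_symm {R S k e : ℕ} (h1 : kappa F e ∈ socle F (R + 1) (S + 1) k)
    (h2 : kappa F e ∉ socle F (R + 1) (S + 1) (k + 1)) :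
    ∃ e', e + e' + k = R + S ∧ kappa F e' ∈ socle F (R + 1) (S + 1) k ∧
      kappa F e' ∉ socle F (R + 1) (S + 1) (k + 1) := by
  obtain ⟨⟨hκ, -⟩, φ₀, hφ₀, hk₀⟩ := mem_socle.1 h1
  -- The preimage of `κ_e` may be taken homogeneous.
  obtain ⟨φ, hφ, hk, hpφ⟩ : ∃ φ ∈ rect F (R + 1) (S + 1), (shZ ^ k) φ = kappa F e ∧
      φ = proj (e + k) φ := by
    refine ⟨proj (e + k) φ₀, proj_mem hφ₀ _, ?_, ?_⟩
    · rw [← proj_shZ_pow, hk₀, proj_kappa]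
    · funext i j
      simp only [proj]
      split_ifs <;> rfl
  have hle : e + k ≤ R + S := by
    by_contra hlt
    have h0 : φ = 0 := by
      rw [hpφ]
      funext i j
      simp only [proj, Pi.zero_apply]
      split_ifs with hij
      · exact hφ i j (by omega)
      · rfl
    rw [h0, map_zero] at hk
    exact kappa_ne_zero e hk.symm
  have hnot : kappa F e ∉ (rect F (R + 1) (S + 1)).map (shZ ^ (k + 1)) := by
    rintro ⟨ψ, hψ, hψe⟩
    exact h2 (mem_socle.2 ⟨⟨hκ, shZ_kappa e⟩, ψ, hψ, hψe⟩)
  obtain ⟨lam, hlam, hker⟩ := Submodule.exists_le_ker_of_notMem hnot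
  obtain ⟨ψ, hψ, hform⟩ := exists_form_eq R S lam
  have hZψ : (shZ ^ (k + 1)) ψ = 0 := by
    refine eq_zero_of_form (shZ_pow_mem hψ _) fun θ hθ => ?_
    rw [← form_shZ_pow hθ hψ, ← hform _ (shZ_pow_mem hθ _)]
    exact hker ⟨θ, hθ, rfl⟩
  set η := (shZ ^ k) ψ with hη
  have hZη : shZ η = 0 := by
    rw [hη, ← Module.End.mul_apply, ← pow_succ', hZψ]
  have hηmem : η ∈ socle F (R + 1) (S + 1) k :=
    mem_socle.2 ⟨⟨shZ_pow_mem hψ k, hZη⟩, ψ, hψ, rfl⟩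
  have hne : form R S φ η ≠ 0 := by
    rw [hη, ← form_shZ_pow hφ hψ, hk, ← hform _ hκ]
    exact hlam
  obtain ⟨e', he'⟩ : ∃ e', (e + k) + e' = R + S := ⟨R + S - (e + k), by omega⟩
  have hsplit : form R S φ η = η e' 0 * form R S φ (kappa F e') := by
    conv_lhs => rw [hpφ, form_proj he', proj_of_shZ_eq_zero hZη]
    simp only [form, Finset.mul_sum, Pi.smul_apply, smul_eq_mul]
    refine Finset.sum_congr rfl fun i _ => Finset.sum_congr rfl fun j _ => ?_
    ring
  rw [hsplit] at hne
  refine ⟨e', by omega, kappa_mem_of_apply_ne_zero hηmem (left_ne_zero_of_mul hne), ?_⟩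
  intro hmem
  obtain ⟨-, θ, hθ, hθe⟩ := mem_socle.1 hmem
  apply right_ne_zero_of_mul hne
  rw [← hθe, ← form_shZ_pow hφ hθ, pow_succ', Module.End.mul_apply, hk, shZ_kappa]
  simp [form]

/-! ### Removing the mixed term -/

/-- The operator `(T φ)(i, j) = ((1 + X) ^ j φ)(i, j)`. It is dual to the substitution
`y ↦ y (1 + x)` and intertwines `X + Y (1 + X)` with `X + Y`. -/
def twist : (ℕ → ℕ → F) →ₗ[F] (ℕ → ℕ → F) where
  toFun φ := fun i j => (((1 + shX : Module.End F (ℕ → ℕ → F)) ^ j) φ) i j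
  map_add' a b := by
    funext i j
    simp
  map_smul' c a := by
    funext i j
    simp

lemma twist_apply (φ : ℕ → ℕ → F) (i j : ℕ) :
    twist φ i j = (((1 + shX : Module.End F (ℕ → ℕ → F)) ^ j) φ) i j := rfl

lemma one_add_shX_pow_comm (k : ℕ) (φ : ℕ → ℕ → F) :
    ((1 + shX : Module.End F (ℕ → ℕ → F)) ^ k) (shX φ) =
      shX (((1 + shX : Module.End F (ℕ → ℕ → F)) ^ k) φ) := by
  have h : Commute ((1 + shX : Module.End F (ℕ → ℕ → F)) ^ k) shX :=
    ((Commute.one_left _).add_left (Commute.refl _)).pow_left k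
  exact LinearMap.congr_fun h.eq φ

lemma one_add_shX_pow_comm_shY (k : ℕ) (φ : ℕ → ℕ → F) :
    ((1 + shX : Module.End F (ℕ → ℕ → F)) ^ k) (shY φ) =
      shY (((1 + shX : Module.End F (ℕ → ℕ → F)) ^ k) φ) := by
  have h0 : Commute (shX : Module.End F (ℕ → ℕ → F)) shY := rfl
  have h : Commute ((1 + shX : Module.End F (ℕ → ℕ → F)) ^ k) shY :=
    ((Commute.one_left _).add_left h0).pow_left k
  exact LinearMap.congr_fun h.eq φ

lemma twist_shX (φ : ℕ → ℕ → F) : twist (shX φ) = shX (twist φ) := by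
  funext i j
  rw [twist_apply, one_add_shX_pow_comm, shX_apply, shX_apply, twist_apply]

lemma twist_shY (φ : ℕ → ℕ → F) : twist (shY ((1 + shX : Module.End F (ℕ → ℕ → F)) φ)) =
    shY (twist φ) := by
  funext i j
  rw [twist_apply, one_add_shX_pow_comm_shY, shY_apply, shY_apply, twist_apply, pow_succ,
    Module.End.mul_apply]

lemma one_add_shX_pow_mem {r s : ℕ} {φ : ℕ → ℕ → F} (h : φ ∈ rect F r s) (k : ℕ) :
    ((1 + shX : Module.End F (ℕ → ℕ → F)) ^ k) φ ∈ rect F r s := by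
  induction k with
  | zero => simpa using h
  | succ k ih =>
    rw [pow_succ', Module.End.mul_apply]
    exact (rect F r s).add_mem ih (shX_mem ih)

lemma twist_mem {r s : ℕ} {φ : ℕ → ℕ → F} (h : φ ∈ rect F r s) : twist φ ∈ rect F r s :=
  fun i j hij => one_add_shX_pow_mem h j i j hij

lemma row_eq_zero {r s : ℕ} (k j : ℕ) {φ : ℕ → ℕ → F} (h : φ ∈ rect F r s)
    (h0 : ∀ i, (((1 + shX : Module.End F (ℕ → ℕ → F)) ^ k) φ) i j = 0) (i : ℕ) :
    φ i j = 0 := by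
  induction k generalizing φ i with
  | zero => simpa using h0 i
  | succ k ih =>
    have h1 : ∀ i, ((1 + shX : Module.End F (ℕ → ℕ → F)) φ) i j = 0 := by
      refine ih (by simpa using one_add_shX_pow_mem h 1) fun i => ?_
      rw [← Module.End.mul_apply, ← pow_succ]
      exact h0 i
    -- Descending induction on `i`, starting beyond the rectangle.
    have h2 : ∀ n i, r ≤ i + n → φ i j = 0 := by
      intro n
      induction n with
      | zero => exact fun i hi => h i j (by omega)
      | succ n ihn =>
        intro i hi
        have h3 : φ i j + φ (i + 1) j = 0 := h1 i
        rwa [ihn (i + 1) (by omega), add_zero] at h3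
    exact h2 r i (by omega)

lemma eq_zero_of_twist {r s : ℕ} {φ : ℕ → ℕ → F} (h : φ ∈ rect F r s) (h0 : twist φ = 0) :
    φ = 0 := by
  funext i j
  exact row_eq_zero j j h (fun i => congrFun (congrFun h0 i) j) i

/-! ### Matrices -/

lemma jordanBlock_mulVec (m : ℕ) (v : Fin m → F) (i : Fin m) :
    (jordanBlock F m).mulVec v i =
      v i + if h : (i : ℕ) + 1 < m then v ⟨i + 1, h⟩ else 0 := by
  have hterm : ∀ x : Fin m, (if (x : ℕ) = i ∨ (x : ℕ) = i + 1 then v x else 0) =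
      (if x = i then v x else 0) + (if (x : ℕ) = i + 1 then v x else 0) := by
    intro x
    by_cases h1 : (x : ℕ) = i
    · simp [h1, Fin.ext_iff]
    · simp [h1, Fin.ext_iff]
  simp only [Matrix.mulVec, dotProduct, jordanBlock, Matrix.of_apply, ite_mul, one_mul, zero_mul]
  rw [Finset.sum_congr rfl fun x _ => hterm x, Finset.sum_add_distrib]
  congr 1
  · simp
  · split_ifs with h
    · rw [Finset.sum_eq_single ⟨i + 1, h⟩]
      · simp
      · intro x _ hx
        rw [if_neg fun h' => hx (Fin.ext h')]
      · simp
    · refine Finset.sum_eq_zero fun x _ => if_neg ?_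
      have := x.2
      omega

/-- Extension by zero of a vector indexed by `Fin r × Fin s`. -/
def extend (F : Type*) [Field F] (r s : ℕ) : (Fin r × Fin s → F) →ₗ[F] (ℕ → ℕ → F) where
  toFun v := fun i j => if h : i < r ∧ j < s then v (⟨i, h.1⟩, ⟨j, h.2⟩) else 0
  map_add' a b := by
    funext i j
    by_cases h : i < r ∧ j < s <;> simp [h]
  map_smul' c a := by
    funext i j
    by_cases h : i < r ∧ j < s <;> simp [h]

lemma extend_apply {r s : ℕ} (v : Fin r × Fin s → F) (i j : ℕ) :
    extend F r s v i j = if h : i < r ∧ j < s then v (⟨i, h.1⟩, ⟨j, h.2⟩) else 0 := rfl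

lemma extend_injective (r s : ℕ) : Function.Injective (extend F r s) := by
  intro a b h
  funext x
  have := congrFun (congrFun h x.1) x.2
  simpa [extend_apply] using this

lemma range_extend (r s : ℕ) : LinearMap.range (extend F r s) = rect F r s := by
  ext φ
  constructor
  · rintro ⟨v, rfl⟩ i j hij
    rw [extend_apply, dif_neg hij]
  · intro h
    refine ⟨fun x => φ x.1 x.2, ?_⟩
    funext i j
    rw [extend_apply]
    split_ifs with hij
    · rfl
    · exact (h i j hij).symm

lemma extend_kronecker {r s : ℕ} (v : Fin r × Fin s → F) :
    extend F r s ((jordanBlock F r ⊗ₖ jordanBlock F s).mulVec v) =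
      extend F r s v + shX (extend F r s v) +
        shY ((1 + shX : Module.End F (ℕ → ℕ → F)) (extend F r s v)) := by
  funext i j
  simp only [Pi.add_apply, shX_apply, shY_apply, LinearMap.add_apply, Module.End.one_apply]
  by_cases h : i < r ∧ j < s
  · have hk : (jordanBlock F r ⊗ₖ jordanBlock F s).mulVec v (⟨i, h.1⟩, ⟨j, h.2⟩) =
        (jordanBlock F r).mulVec
          (fun a => (jordanBlock F s).mulVec (fun b => v (a, b)) ⟨j, h.2⟩) ⟨i, h.1⟩ := by
      simp only [Matrix.mulVec, dotProduct, Fintype.sum_prod_type, Matrix.kronecker_apply,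
        Finset.mul_sum, mul_assoc]
    rw [extend_apply, dif_pos h, hk]
    simp only [jordanBlock_mulVec, extend_apply, h, true_and, and_true]
    by_cases hi : i + 1 < r <;> by_cases hj : j + 1 < s <;> simp [hi, hj] <;> ring
  · have h1 : ¬ (i + 1 < r ∧ j < s) := by omega
    have h2 : ¬ (i < r ∧ j + 1 < s) := by omega
    have h3 : ¬ (i + 1 < r ∧ j + 1 < s) := by omega
    simp only [extend_apply, dif_neg h, dif_neg h1, dif_neg h2, dif_neg h3, add_zero]

/-- Vectors for `J_r ⊗ J_s`, in coordinates in which `J_r ⊗ J_s - 1` acts as `X + Y`. -/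
def model (F : Type*) [Field F] (r s : ℕ) : (Fin r × Fin s → F) →ₗ[F] (ℕ → ℕ → F) :=
  twist ∘ₗ extend F r s

lemma model_kronecker {r s : ℕ} (v : Fin r × Fin s → F) :
    model F r s ((jordanBlock F r ⊗ₖ jordanBlock F s).mulVec v) =
      model F r s v + shZ (model F r s v) := by
  rw [model, LinearMap.comp_apply, LinearMap.comp_apply, extend_kronecker, map_add, map_add,
    twist_shX, twist_shY, shZ, LinearMap.add_apply, add_assoc]

lemma model_injective (r s : ℕ) : Function.Injective (model F r s) := by
  rw [← LinearMap.ker_eq_bot, LinearMap.ker_eq_bot']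
  intro v hv
  have hmem : extend F r s v ∈ rect F r s := range_extend (F := F) r s ▸ ⟨v, rfl⟩
  apply extend_injective (F := F) r s
  rw [map_zero]
  exact eq_zero_of_twist hmem hv

lemma range_model (r s : ℕ) : LinearMap.range (model F r s) = rect F r s := by
  have hfin : FiniteDimensional F (rect F r s) := by
    rw [← range_extend]
    infer_instance
  refine Submodule.eq_of_le_of_finrank_eq ?_ ?_
  · rintro _ ⟨v, rfl⟩
    exact twist_mem (range_extend (F := F) r s ▸ ⟨v, rfl⟩)
  · rw [LinearMap.finrank_range_of_inj (model_injective r s), ← range_extend,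
      LinearMap.finrank_range_of_inj (extend_injective r s)]

/-! ### Counting Jordan blocks -/

section Blocks

variable {ι : Type} (d : ι → ℕ)

/-- The nilpotent part of a block-diagonal sum of Jordan blocks: the shift inside each block. -/
def blockShift (F : Type*) [Field F] : Module.End F (((x : ι) × Fin (d x)) → F) where
  toFun w := fun y => if h : (y.2 : ℕ) + 1 < d y.1 then w ⟨y.1, ⟨y.2 + 1, h⟩⟩ else 0
  map_add' a b := by
    funext y
    by_cases h : (y.2 : ℕ) + 1 < d y.1 <;> simp [h]
  map_smul' c a := by
    funext y
    by_cases h : (y.2 : ℕ) + 1 < d y.1 <;> simp [h]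

lemma blockShift_apply (w : ((x : ι) × Fin (d x)) → F) (y : (x : ι) × Fin (d x)) :
    blockShift d F w y = if h : (y.2 : ℕ) + 1 < d y.1 then w ⟨y.1, ⟨y.2 + 1, h⟩⟩ else 0 := rfl

lemma blockShift_pow_apply (k : ℕ) (w : ((x : ι) × Fin (d x)) → F) (y : (x : ι) × Fin (d x)) :
    (blockShift d F ^ k) w y =
      if h : (y.2 : ℕ) + k < d y.1 then w ⟨y.1, ⟨y.2 + k, h⟩⟩ else 0 := by
  induction k generalizing y with
  | zero => simp
  | succ k ih =>
    rw [pow_succ', Module.End.mul_apply, blockShift_apply]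
    by_cases h : (y.2 : ℕ) + 1 < d y.1
    · rw [dif_pos h, ih]
      have : (y.2 : ℕ) + 1 + k = y.2 + (k + 1) := by omega
      simp only [this]
    · rw [dif_neg h, dif_neg (by omega)]

lemma jordanBlockDiag_mulVec [Fintype ι] [DecidableEq ι] (w : ((x : ι) × Fin (d x)) → F) :
    (jordanBlockDiag F d).mulVec w = w + blockShift d F w := by
  funext ⟨x, i⟩
  have h1 : (jordanBlockDiag F d).mulVec w ⟨x, i⟩ =
      (jordanBlock F (d x)).mulVec (fun j => w ⟨x, j⟩) i := by
    simp only [Matrix.mulVec, dotProduct, jordanBlockDiag, Fintype.sum_sigma]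
    rw [Finset.sum_eq_single x]
    · simp [Matrix.blockDiagonal'_apply]
    · intro x' _ hx
      refine Finset.sum_eq_zero fun j _ => ?_
      rw [Matrix.blockDiagonal'_apply_ne _ _ _ hx.symm, zero_mul]
    · simp
  rw [h1, jordanBlock_mulVec]
  rfl

/-- The vectors supported at the bottom of the Jordan blocks of size greater than `k`. -/
def bottom (F : Type*) [Field F] (k : ℕ) :
    ({x // k < d x} → F) →ₗ[F] (((x : ι) × Fin (d x)) → F) where
  toFun c := fun y => if h : (y.2 : ℕ) = 0 ∧ k < d y.1 then c ⟨y.1, h.2⟩ else 0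
  map_add' a b := by
    funext y
    by_cases h : (y.2 : ℕ) = 0 ∧ k < d y.1 <;> simp [h]
  map_smul' c a := by
    funext y
    by_cases h : (y.2 : ℕ) = 0 ∧ k < d y.1 <;> simp [h]

lemma bottom_apply (k : ℕ) (c : {x // k < d x} → F) (y : (x : ι) × Fin (d x)) :
    bottom d F k c y = if h : (y.2 : ℕ) = 0 ∧ k < d y.1 then c ⟨y.1, h.2⟩ else 0 := rfl

lemma bottom_injective (k : ℕ) : Function.Injective (bottom d F k) := by
  intro a b h
  funext x
  have := congrFun h ⟨x.1, ⟨0, by have := x.2; omega⟩⟩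
  simpa [bottom_apply, x.2] using this

lemma range_bottom (k : ℕ) (w : ((x : ι) × Fin (d x)) → F) :
    (∃ c, bottom d F k c = w) ↔ blockShift d F w = 0 ∧ ∃ u, (blockShift d F ^ k) u = w := by
  constructor
  · rintro ⟨c, rfl⟩
    constructor
    · funext y
      rw [blockShift_apply]
      split_ifs with h
      · simp [bottom_apply]
      · rfl
    · refine ⟨fun y => if h : (y.2 : ℕ) = k then c ⟨y.1, h ▸ y.2.2⟩ else 0, ?_⟩
      funext ⟨x, i⟩
      rw [blockShift_pow_apply, bottom_apply]
      by_cases hi : (i : ℕ) = 0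
      · simp [hi]
      · simp [hi]
  · rintro ⟨h0, u, rfl⟩
    refine ⟨fun x => (blockShift d F ^ k) u ⟨x.1, ⟨0, by have := x.2; omega⟩⟩, ?_⟩
    funext ⟨x, i, hi⟩
    rw [bottom_apply]
    rcases i with _ | i
    · simp only [true_and]
      split_ifs with hk
      · rfl
      · rw [blockShift_pow_apply, dif_neg]
        simpa using hk
    · have := congrFun h0 ⟨x, i, by omega⟩
      rw [blockShift_apply, dif_pos hi] at this
      rw [dif_neg (by simp)]
      exact this.symm

/-- The dimension of `K_k` is the number of Jordan blocks of size greater than `k`. -/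
lemma finrank_socle_eq_card [Fintype ι] [DecidableEq ι] {r s : ℕ}
    (hsim : MatSimilar F (jordanBlock F r ⊗ₖ jordanBlock F s) (jordanBlockDiag F d)) (k : ℕ) :
    Module.finrank F (socle F r s k) = Fintype.card {x // k < d x} := by
  obtain ⟨e, he⟩ := hsim
  set Φ : (((x : ι) × Fin (d x)) → F) →ₗ[F] (ℕ → ℕ → F) :=
    model F r s ∘ₗ e.symm.toLinearMap with hΦ
  have hinj : Function.Injective Φ := (model_injective r s).comp e.symm.injective
  have hrange : ∀ φ, φ ∈ rect F r s ↔ ∃ w, Φ w = φ := by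
    intro φ
    rw [← range_model]
    constructor
    · rintro ⟨v, rfl⟩
      exact ⟨e v, by simp [hΦ]⟩
    · rintro ⟨w, rfl⟩
      exact ⟨e.symm w, rfl⟩
  have hshift : ∀ w, Φ (blockShift d F w) = shZ (Φ w) := by
    intro w
    have h1 := he (e.symm w)
    rw [e.apply_symm_apply, jordanBlockDiag_mulVec] at h1
    have h2 := congrArg Φ h1
    rw [map_add] at h2
    have h3 : Φ (e ((jordanBlock F r ⊗ₖ jordanBlock F s).mulVec (e.symm w))) =
        Φ w + shZ (Φ w) := by
      simp [hΦ, model_kronecker]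
    rw [h3] at h2
    exact (add_left_cancel h2).symm
  have hpow : ∀ w, Φ ((blockShift d F ^ k) w) = (shZ ^ k) (Φ w) := by
    intro w
    have : ∀ n, Φ ((blockShift d F ^ n) w) = (shZ ^ n) (Φ w) := by
      intro n
      induction n with
      | zero => simp
      | succ n ih =>
        rw [pow_succ', Module.End.mul_apply, hshift, ih, pow_succ', Module.End.mul_apply]
    exact this k
  have hsocle : socle F r s k = LinearMap.range (Φ ∘ₗ bottom d F k) := by
    ext φ
    rw [mem_socle]
    constructor
    · rintro ⟨⟨hφ, hZ⟩, ψ, hψ, rfl⟩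
      obtain ⟨u, rfl⟩ := (hrange ψ).1 hψ
      rw [← hpow, ← hshift] at hZ
      obtain ⟨c, hc⟩ := (range_bottom d k ((blockShift d F ^ k) u)).2
        ⟨hinj (by rw [hZ, map_zero]), u, rfl⟩
      exact ⟨c, by rw [LinearMap.comp_apply, hc, hpow]⟩
    · rintro ⟨c, rfl⟩
      obtain ⟨h0, u, hu⟩ := (range_bottom d k (bottom d F k c)).1 ⟨c, rfl⟩
      rw [LinearMap.comp_apply]
      exact ⟨⟨(hrange _).2 ⟨_, rfl⟩, by rw [← hshift, h0, map_zero]⟩, Φ u,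
        (hrange _).2 ⟨_, rfl⟩, by rw [← hpow, hu]⟩
  rw [hsocle, LinearMap.finrank_range_of_inj
    (show Function.Injective (Φ ∘ₗ bottom d F k) from hinj.comp (bottom_injective d k)),
    Module.finrank_fintype_fun_eq_card]

end Blocks

lemma card_blocks {t : ℕ} (μ m : Fin t → ℕ) (k : ℕ) :
    Fintype.card {x : (i : Fin t) × Fin (m i) // k < μ x.1} =
      ∑ j ∈ Finset.univ.filter (fun j => k < μ j), m j := by
  rw [Fintype.card_subtype, Finset.card_filter, Fintype.sum_sigma, Finset.sum_filter]
  refine Finset.sum_congr rfl fun j _ => ?_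
  by_cases h : k < μ j <;> simp [h]

end JordanTensor

open JordanTensor in
/-- Formula `μ_i = r + s − m_i − 2·Σ_{j<i} m_j` for the distinct part sizes. -/
theorem stmt_2 {F : Type*} [Field F] (p : ℕ) (hp : p.Prime) [CharP F p]
    (r s : ℕ) (hr : 0 < r) (hs : 0 < s)
    (t : ℕ) (μ : Fin t → ℕ) (m : Fin t → ℕ)
    (hμ : StrictAnti μ) (hμpos : ∀ i, 0 < μ i) (hm : ∀ i, 1 ≤ m i)
    (hsim : MatSimilar F (jordanBlock F r ⊗ₖ jordanBlock F s)
      (jordanBlockDiag F (fun x : (i : Fin t) × Fin (m i) => μ x.1))) :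
    ∀ i : Fin t, (μ i : ℤ) = (r : ℤ) + s - m i -
      2 * ∑ j ∈ Finset.univ.filter (fun j => j < i), (m j : ℤ) := by
  intro i
  obtain ⟨R, rfl⟩ : ∃ R, r = R + 1 := ⟨r - 1, by omega⟩
  obtain ⟨S, rfl⟩ : ∃ S, s = S + 1 := ⟨s - 1, by omega⟩
  obtain ⟨k, hk⟩ : ∃ k, μ i = k + 1 := ⟨μ i - 1, by have := hμpos i; omega⟩
  have hcount := fun n => (finrank_socle_eq_card _ hsim n).trans (card_blocks μ m n)
  set a := ∑ j ∈ Finset.univ.filter (fun j => j < i), m j with ha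
  have h1 : Module.finrank F (socle F (R + 1) (S + 1) (k + 1)) = a := by
    rw [hcount, ha, ← hk]
    exact Finset.sum_congr (by ext j; simp [hμ.lt_iff_gt]) fun _ _ => rfl
  have h0 : Module.finrank F (socle F (R + 1) (S + 1) k) = a + m i := by
    have hset : Finset.univ.filter (fun j => k < μ j) =
        insert i (Finset.univ.filter fun j => j < i) := by
      ext j
      have h : k < μ j ↔ μ i ≤ μ j := by omega
      simp [h, hμ.le_iff_ge, le_iff_eq_or_lt]
    rw [hcount, hset, Finset.sum_insert (by simp), add_comm]
  have key : ∀ e, a ≤ e → e < a + m i →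
      ∃ e', e + e' + k = R + S ∧ e' < a + m i ∧ a ≤ e' := by
    intro e he1 he2
    obtain ⟨e', h, h2, h3⟩ := kappa_symm (F := F) (R := R) (S := S) (k := k) (e := e)
      (by rw [kappa_mem_iff_lt, h0]; exact he2)
      (by rw [kappa_mem_iff_lt, h1]; omega)
    rw [kappa_mem_iff_lt, h0] at h2
    rw [kappa_mem_iff_lt, h1] at h3
    exact ⟨e', h, h2, by omega⟩
  have hmi := hm i
  -- The two endpoints of the interval `[a, a + m i)` are exchanged by the reflection.
  obtain ⟨e₁, h₁, h₁', -⟩ := key a le_rfl (by omega)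
  obtain ⟨e₂, h₂, -, h₂'⟩ := key (a + m i - 1) (by omega) (by omega)
  have hcast : ∑ j ∈ Finset.univ.filter (fun j => j < i), (m j : ℤ) = (a : ℤ) := by
    rw [ha]
    push_cast
    rfl
  rw [hcast, hk]
  push_cast
  omega
end

section
/- Let p be a prime, F a field of characteristic p, and r, s positive integers. Suppose the Kronecker product J_r ⊗ J_s is similar over F to the block-diagonal matrix consisting, for each 1 ≤ i ≤ t, of exactly m_i ≥ 1 diagonal blocks equal to J_{μ_i}, where μ_1 > ⋯ > μ_t > 0. Then m_1 = r + s − μ_1, and m_i = μ_{i−1} − μ_i − m_{i−1} for every 2 ≤ i ≤ t. -/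
/-!
The operator `J_r ⊗ J_s - 1` equals `X + Y` with `X = N_r ⊗ J_s`, `Y = 1 ⊗ N_s` (`N = J - 1`). These
commute, `X ^ r = 0`, `Y ^ s = 0` and `X ^ (r - 1) * Y ^ (s - 1) ≠ 0`, so the space is the graded algebra
`F[x, y] / (x ^ r, y ^ s)` with `z = x + y` acting by multiplication. Assume `r ≤ s`.

For each `j < r` choose `e j` of degree `j`, congruent to `y ^ j` modulo `z`, killed by the least
possible power `z ^ (d j)`. Then the `z ^ a * e j` with `a < d j` form a basis
(`exists_strings`), so the Jordan blocks have sizes `d 0, …, d (r - 1)`; multiplying by `y` shows that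
`d` is weakly decreasing. In degree `n ≥ s - 1` the algebra has dimension `(r + s - 1 - n)⁺`, which is
therefore the number of `j` with `n < j + d j`. Hence `j ↦ j + d j` is a bijection from `[0, r)` onto
`[s, r + s)` (`ends_bij`).

The indices with `d j = c` form an interval, on which `j + d j` runs through an interval of the same
length. Monotonicity and injectivity force these intervals to be ordered by decreasing position
(`ends_lt`), and surjectivity makes them adjacent, starting from the top `r + s`. Reading off the
end points gives the recurrence (`card_max_part`, `card_consecutive_parts`). The multiplicities in the
hypothesis agree with those of `d` since both are second differences of the ranks of `z ^ l`.
-/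

open Kronecker

open Finset Module

/-! ### Combinatorics of string lengths -/

/-- If `d` is weakly decreasing and the ends `j + d j` are distinct, then a later string either has
the same length or ends strictly earlier: the end increases by at most one at each step, so
it could only climb back through ends that are already taken. -/
theorem ends_lt {r : ℕ} {d : ℕ → ℕ} (hd : Antitone d)
    (hinj : Set.InjOn (fun j => j + d j) (Set.Iio r))
    {i j : ℕ} (hij : i ≤ j) (hj : j < r) :
    d j = d i ∨ j + d j < i + d i := by
  induction j, hij using Nat.le_induction with
  | base => exact Or.inl rfl
  | succ j hij ih =>
    have hstep : d (j + 1) ≤ d j := hd (Nat.le_succ j)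
    rcases ih (by omega) with h | h
    · rcases hstep.eq_or_lt with h' | h'
      · exact Or.inl (h'.trans h)
      · right
        by_contra hcon
        -- the ends of `i, …, j` fill `[i + d i, j + d j]`, so `j + 1` would repeat one of them
        have hk : d (j + 1 + d (j + 1) - d i) = d i := by
          apply le_antisymm (hd (by omega))
          rw [← h]; exact hd (by omega)
        have := hinj (x₁ := j + 1) (x₂ := j + 1 + d (j + 1) - d i)
          (Set.mem_Iio.2 hj) (Set.mem_Iio.2 (by omega)) (by simp only [hk]; omega)
        omega
    · right
      have hne : j + 1 + d (j + 1) ≠ i + d i := fun h' => by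
        have := hinj (x₁ := j + 1) (x₂ := i) (Set.mem_Iio.2 hj) (Set.mem_Iio.2 (by omega)) h'
        omega
      omega

/-- The count of the strings alive in each degree `n ≥ s - 1` says exactly that `j ↦ j + d j` is a
bijection from `[0, r)` onto `[s, r + s)`. -/
theorem ends_bij {r s : ℕ} {d : ℕ → ℕ}
    (hcount : ∀ n, s ≤ n + 1 → #{j ∈ range r | n < j + d j} = r + s - 1 - n) (hs : 0 < s) :
    (∀ j < r, s ≤ j + d j ∧ j + d j < r + s) ∧
    Set.InjOn (fun j => j + d j) (Set.Iio r) ∧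
    (∀ n, s ≤ n → n < r + s → ∃ j < r, j + d j = n) := by
  have hlow : ∀ j < r, s ≤ j + d j := by
    have h := hcount (s - 1) (by omega)
    have h2 : #{j ∈ range r | s - 1 < j + d j} = #(range r) := by
      rw [h, card_range]; omega
    intro j hj
    have := (card_filter_eq_iff.1 h2) j (mem_range.2 hj)
    omega
  have hone : ∀ n, s ≤ n → n < r + s → #{j ∈ range r | j + d j = n} = 1 := by
    intro n hn hn'
    have h1 := hcount (n - 1) (by omega)
    have h2 := hcount n (by omega)
    have h3 : #{j ∈ range r | n - 1 < j + d j} =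
        #{j ∈ range r | j + d j = n} + #{j ∈ range r | n < j + d j} := by
      rw [← card_union_of_disjoint, ← filter_or]
      · congr 1
        apply filter_congr
        intros; omega
      · rw [disjoint_filter]; intros; omega
    omega
  have hhigh : ∀ j < r, j + d j < r + s := by
    intro j hj
    have h := hcount (r + s - 1) (by omega)
    rw [Nat.sub_self, card_eq_zero, filter_eq_empty_iff] at h
    have := h (mem_range.2 hj)
    omega
  refine ⟨fun j hj => ⟨hlow j hj, hhigh j hj⟩, ?_, ?_⟩
  · intro i hi j hj hij
    simp only [Set.mem_Iio] at hi hj hij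
    have h := (hone _ (hlow i hi) (hhigh i hi)).le
    rw [card_le_one] at h
    exact h i (by simp [hi]) j (by simp [hj, hij])
  · intro n hn hn'
    obtain ⟨j, hj⟩ := card_pos.1 (by rw [hone n hn hn']; exact Nat.one_pos)
    simp only [mem_filter, mem_range] at hj
    exact ⟨j, hj⟩

theorem sum_eq_mul_of_ends {r s : ℕ} {d : ℕ → ℕ}
    (hcount : ∀ n, s ≤ n + 1 → #{j ∈ range r | n < j + d j} = r + s - 1 - n) (hs : 0 < s) :
    ∑ j ∈ range r, d j = r * s := by
  obtain ⟨hb, hinj, hsurj⟩ := ends_bij hcount hs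
  have himg : (range r).image (fun j => j + d j) = Ico s (r + s) := by
    ext n
    simp only [mem_image, mem_range, mem_Ico]
    constructor
    · rintro ⟨j, hj, rfl⟩; exact hb j hj
    · rintro ⟨h1, h2⟩; exact hsurj n h1 h2
  have h1 : ∑ x ∈ Ico s (r + s), x = ∑ j ∈ range r, (j + d j) := by
    rw [← himg, sum_image]
    intro i hi j hj h
    exact hinj (by simpa using hi) (by simpa using hj) h
  rw [sum_Ico_eq_sum_range, Nat.add_sub_cancel, sum_add_distrib, sum_add_distrib] at h1
  simp only [sum_const, card_range, smul_eq_mul] at h1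
  omega

/-- For weakly decreasing `d`, the set of `i < r` with `c ≤ d i` is an initial segment of `ℕ`. -/
theorem lt_card_iff {r : ℕ} {d : ℕ → ℕ} (hd : Antitone d) (c : ℕ) (j : ℕ) :
    j < #{i ∈ range r | c ≤ d i} ↔ j < r ∧ c ≤ d j := by
  constructor
  · intro h
    by_contra hcon
    have hsub : ({i ∈ range r | c ≤ d i} : Finset ℕ) ⊆ range j := by
      intro i hi
      simp only [mem_filter, mem_range] at hi ⊢
      by_contra hij
      have := hd (not_lt.1 hij)
      exact hcon ⟨by omega, by omega⟩
    have := card_le_card hsub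
    rw [card_range] at this
    omega
  · rintro ⟨h1, h2⟩
    have hsub : range (j + 1) ⊆ ({i ∈ range r | c ≤ d i} : Finset ℕ) := by
      intro i hi
      simp only [mem_filter, mem_range] at hi ⊢
      have := hd (Nat.lt_succ_iff.1 hi)
      omega
    have := card_le_card hsub
    rw [card_range] at this
    omega

/-- The block of strings of maximal length is `[0, q)`, and its last end must be the largest
possible end `r + s - 1`. -/
theorem card_max_part {r s : ℕ} {d : ℕ → ℕ} (hd : Antitone d) (hr : 0 < r) (hs : 0 < s)
    (hcount : ∀ n, s ≤ n + 1 → #{j ∈ range r | n < j + d j} = r + s - 1 - n)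
    {c : ℕ} (hc : ∀ j < r, d j ≤ c) (hc' : ∃ j < r, d j = c) :
    #{j ∈ range r | d j = c} + c = r + s := by
  obtain ⟨hb, hinj, hsurj⟩ := ends_bij hcount hs
  have h0 : d 0 = c := by
    obtain ⟨j, hj, rfl⟩ := hc'
    exact le_antisymm (hc 0 hr) (hd (Nat.zero_le _))
  have hq : #{j ∈ range r | d j = c} = #{j ∈ range r | c ≤ d j} := by
    congr 1
    apply filter_congr
    intro j hj
    have := hc j (mem_range.1 hj)
    omega
  rw [hq]
  set q := #{j ∈ range r | c ≤ d j} with hqd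
  have hqiff : ∀ j, j < q ↔ j < r ∧ c ≤ d j := lt_card_iff hd c
  have hqpos : 0 < q := (hqiff 0).2 ⟨hr, h0.ge⟩
  obtain ⟨i, hi, hie⟩ := hsurj (r + s - 1) (by omega) (by omega)
  have hlast := (hqiff (q - 1)).1 (by omega)
  have h1 := hb (q - 1) hlast.1
  have h2 := hc _ hlast.1
  have h3 := hc _ hi
  rcases ends_lt hd hinj (Nat.zero_le i) hi with h | h
  · have := (hqiff i).2 ⟨hi, by omega⟩
    omega
  · have := hb 0 hr
    omega

/-- For consecutive values `c' < c` of `d`, the ends of the strings of length `c'` form the interval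
immediately below the ends of the strings of length `c`. -/
theorem card_consecutive_parts {r s : ℕ} {d : ℕ → ℕ} (hd : Antitone d) (hs : 0 < s)
    (hcount : ∀ n, s ≤ n + 1 → #{j ∈ range r | n < j + d j} = r + s - 1 - n)
    {c c' : ℕ} (hcc : c' < c) (hc : ∃ j < r, d j = c) (hc' : ∃ j < r, d j = c')
    (hgap : ∀ j < r, d j < c → d j ≤ c') :
    #{j ∈ range r | d j = c} + #{j ∈ range r | d j = c'} + c' = c := by
  obtain ⟨hb, hinj, hsurj⟩ := ends_bij hcount hs
  have hsum : #{j ∈ range r | c' ≤ d j} =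
      #{j ∈ range r | c + 1 ≤ d j} + (#{j ∈ range r | d j = c} + #{j ∈ range r | d j = c'}) := by
    rw [← card_union_of_disjoint, ← filter_or, ← card_union_of_disjoint, ← filter_or]
    · congr 1
      apply filter_congr
      intro j hj
      have := hgap j (mem_range.1 hj)
      omega
    · rw [disjoint_filter]; intros; omega
    · rw [disjoint_filter]; intros; omega
  -- with `p` and `t` the two counts below, block `c` starts at `p` and block `c'` ends at `t - 1`
  have hpiff := lt_card_iff (r := r) hd (c + 1)
  have htiff := lt_card_iff (r := r) hd c'
  set p := #{j ∈ range r | c + 1 ≤ d j}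
  set t := #{j ∈ range r | c' ≤ d j}
  obtain ⟨jc, hjc, rfl⟩ := hc
  obtain ⟨jc', hjc', rfl⟩ := hc'
  have hpj : p ≤ jc := by
    by_contra h
    have := (hpiff jc).1 (by omega)
    omega
  have hdp : d p = d jc := by
    have h1 := hd hpj
    have h2 := mt (hpiff p).2 (lt_irrefl p)
    omega
  have hjt : jc' < t := (htiff jc').2 ⟨hjc', le_rfl⟩
  have ht1 := (htiff (t - 1)).1 (by omega)
  have hdt : d (t - 1) = d jc' := le_antisymm (hd (by omega)) ht1.2
  have hpt : p < t - 1 := by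
    by_contra h
    have := hd (not_lt.1 h)
    omega
  have hlt : t - 1 + d (t - 1) < p + d p := by
    rcases ends_lt hd hinj hpt.le ht1.1 with h | h
    · omega
    · exact h
  have hbt := hb _ ht1.1
  have hbp := hb p (by omega)
  -- the string ending just below the first end of block `c` has to be the last one of block `c'`
  obtain ⟨i, hi, hie⟩ := hsurj (p + d p - 1) (by omega) (by omega)
  have hg := hgap i hi
  rcases lt_or_ge i p with h | h
  · have h1 := (hpiff i).1 h
    rcases ends_lt hd hinj h.le (by omega) with h' | h' <;> omega
  · have h1 := hd h
    rcases h1.eq_or_lt with h2 | h2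
    · omega
    · have h3 := hg (by omega)
      rcases lt_or_ge i t with h4 | h4
      · have := (htiff i).1 h4
        omega
      · have h5 := mt (htiff i).2 (by omega)
        rcases ends_lt hd hinj (i := t - 1) (by omega) hi with h' | h' <;> omega

/-! ### String decomposition -/

/-- If `V` has a basis made of strings `g i 0 ↦ g i 1 ↦ ⋯ ↦ g i (d i - 1) ↦ 0` for `Z`, then
`Z ^ l` has rank `∑ i, (d i - l)⁺`. -/
theorem finrank_range_pow_of_strings {F V ι : Type*} [Field F] [AddCommGroup V] [Module F V]
    [Fintype ι] (Z : Module.End F V) (d : ι → ℕ) (g : ι → ℕ → V)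
    (hg0 : ∀ i a, d i ≤ a → g i a = 0) (hZ : ∀ i a, Z (g i a) = g i (a + 1))
    (hli : LinearIndependent F (fun x : (i : ι) × Fin (d i) => g x.1 x.2))
    (hspan : ⊤ ≤ Submodule.span F (Set.range (fun x : (i : ι) × Fin (d i) => g x.1 x.2)))
    (l : ℕ) : finrank F (LinearMap.range (Z ^ l)) = ∑ i, (d i - l) := by
  have hpow : ∀ i a, (Z ^ l) (g i a) = g i (a + l) := by
    intro i a
    induction l with
    | zero => simp
    | succ l ih => rw [pow_succ', Module.End.mul_apply, ih, hZ, add_assoc]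
  let w : (i : ι) × Fin (d i - l) → (i : ι) × Fin (d i) :=
    fun x => ⟨x.1, ⟨x.2 + l, by have := x.2.2; omega⟩⟩
  have hw : Function.Injective w := by
    rintro ⟨i, a⟩ ⟨j, b⟩ h
    simp only [w, Sigma.mk.injEq] at h
    obtain ⟨rfl, h⟩ := h
    simp only [heq_eq_eq, Fin.mk.injEq, Nat.add_right_cancel_iff] at h
    simp [Fin.ext h]
  have hrange : LinearMap.range (Z ^ l) = Submodule.span F
      (Set.range ((fun x : (i : ι) × Fin (d i) => g x.1 x.2) ∘ w)) := by
    rw [LinearMap.range_eq_map, ← top_le_iff.1 hspan, Submodule.map_span]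
    apply le_antisymm <;> rw [Submodule.span_le]
    · rintro _ ⟨_, ⟨⟨i, a⟩, rfl⟩, rfl⟩
      simp only [hpow]
      by_cases h : a + l < d i
      · exact Submodule.subset_span ⟨⟨i, ⟨a, by omega⟩⟩, rfl⟩
      · rw [hg0 _ _ (not_lt.1 h)]; exact Submodule.zero_mem _
    · rintro _ ⟨⟨i, a⟩, rfl⟩
      exact Submodule.subset_span ⟨_, ⟨⟨i, ⟨a, by have := a.2; omega⟩⟩, rfl⟩, hpow _ _⟩
  rw [hrange, finrank_span_eq_card (hli.comp w hw)]
  simp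

/-- In a relation among the `X ^ a Y ^ b v₀`, the operator `X ^ (r - 1 - a) Y ^ (s - 1 - b)` isolates
the coefficient of a term of minimal degree. -/
theorem linearIndependent_monomials {F V : Type*} [Field F] [AddCommGroup V] [Module F V]
    {X Y : Module.End F V} (hXY : Commute X Y) {r s : ℕ} (hX : X ^ r = 0) (hY : Y ^ s = 0)
    {v₀ : V} (hv₀ : (X ^ (r - 1) * Y ^ (s - 1)) v₀ ≠ 0) :
    LinearIndependent F (fun x : Fin r × Fin s => (X ^ (x.1 : ℕ) * Y ^ (x.2 : ℕ)) v₀) := by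
  rw [Fintype.linearIndependent_iff]
  intro c hc
  suffices H : ∀ n, ∀ x : Fin r × Fin s, (x.1 + x.2 : ℕ) = n → c x = 0 from fun x => H _ x rfl
  intro n
  induction n using Nat.strong_induction_on with
  | _ n ih =>
    rintro ⟨a, b⟩ hab
    have h := congrArg (X ^ (r - 1 - a) * Y ^ (s - 1 - b) : Module.End F V) hc
    rw [map_sum, map_zero, Finset.sum_eq_single (a, b)] at h
    · rw [map_smul, ← Module.End.mul_apply, mul_assoc, ← mul_assoc (Y ^ _),
        ((hXY.pow_pow a (s - 1 - b)).eq).symm, mul_assoc, ← mul_assoc, ← pow_add, ← pow_add] at h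
      rw [show r - 1 - (a : ℕ) + a = r - 1 by omega, show s - 1 - (b : ℕ) + b = s - 1 by omega] at h
      exact (smul_eq_zero.1 h).resolve_right hv₀
    · rintro ⟨a', b'⟩ - hne
      rw [map_smul, ← Module.End.mul_apply, mul_assoc, ← mul_assoc (Y ^ _),
        ((hXY.pow_pow a' (s - 1 - b)).eq).symm, mul_assoc, ← mul_assoc, ← pow_add, ← pow_add]
      dsimp only
      by_cases h1 : a < a'
      · rw [pow_eq_zero_of_le (by omega : r ≤ r - 1 - (a : ℕ) + a') hX]; simp
      by_cases h2 : b < b'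
      · rw [pow_eq_zero_of_le (by omega : s ≤ s - 1 - (b : ℕ) + b') hY]; simp
      have h3 : ¬ ((a' : ℕ) = a ∧ (b' : ℕ) = b) := fun h => hne (by
        rw [Fin.ext h.1, Fin.ext h.2])
      rw [ih (a' + b') (by dsimp only at hab; omega) (a', b') rfl, zero_smul]
    · simp

/-- The degree `n` piece: the span of the `v a b` with `a + b = n`, where `v a b` stands for the
monomial `x ^ a y ^ b`. -/
def degPiece (F : Type*) {V : Type*} [Field F] [AddCommGroup V] [Module F V] (v : ℕ → ℕ → V)
    (n : ℕ) : Submodule F V :=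
  Submodule.span F {w | ∃ a b, a + b = n ∧ w = v a b}

/-- The image under `Z` of the degree `n - 1` piece, with the value `0` for `n = 0`. -/
def lowPiece {F V : Type*} [Field F] [AddCommGroup V] [Module F V] (Z : Module.End F V)
    (v : ℕ → ℕ → V) (n : ℕ) : Submodule F V :=
  Submodule.span F {w | ∃ a b, a + b + 1 = n ∧ w = Z (v a b)}

section Strings

variable {F V : Type*} [Field F] [AddCommGroup V] [Module F V] {Z Y : Module.End F V}
  {v : ℕ → ℕ → V}

theorem lowPiece_succ (n : ℕ) : lowPiece Z v (n + 1) = (degPiece F v n).map Z := by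
  rw [lowPiece, degPiece, Submodule.map_span]
  congr 1
  ext w
  simp only [Set.mem_ofPred_eq, Set.mem_image, Nat.add_right_cancel_iff]
  constructor
  · rintro ⟨a, b, h, rfl⟩; exact ⟨_, ⟨a, b, h, rfl⟩, rfl⟩
  · rintro ⟨_, ⟨a, b, h, rfl⟩, rfl⟩; exact ⟨a, b, h, rfl⟩

theorem map_degPiece_le (hZ : ∀ a b, Z (v a b) = v (a + 1) b + v a (b + 1)) (n : ℕ) :
    (degPiece F v n).map Z ≤ degPiece F v (n + 1) := by
  rw [degPiece, Submodule.map_span, Submodule.span_le]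
  rintro _ ⟨_, ⟨a, b, h, rfl⟩, rfl⟩
  rw [hZ]
  exact Submodule.add_mem _ (Submodule.subset_span ⟨_, _, by omega, rfl⟩)
    (Submodule.subset_span ⟨_, _, by omega, rfl⟩)

theorem lowPiece_le (hZ : ∀ a b, Z (v a b) = v (a + 1) b + v a (b + 1)) (n : ℕ) :
    lowPiece Z v n ≤ degPiece F v n := by
  cases n with
  | zero =>
    rw [lowPiece, Submodule.span_le]
    rintro _ ⟨a, b, h, -⟩
    omega
  | succ n => rw [lowPiece_succ]; exact map_degPiece_le hZ n

theorem pow_mem_degPiece (hZ : ∀ a b, Z (v a b) = v (a + 1) b + v a (b + 1)) {n : ℕ} {w : V}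
    (hw : w ∈ degPiece F v n) (k : ℕ) : (Z ^ k) w ∈ degPiece F v (n + k) := by
  induction k with
  | zero => simpa
  | succ k ih =>
    rw [pow_succ', Module.End.mul_apply, ← add_assoc]
    exact map_degPiece_le hZ _ (Submodule.mem_map_of_mem ih)

theorem map_lowPiece_le (hY : ∀ a b, Y (v a b) = v a (b + 1)) (hYZ : Commute Y Z) {n : ℕ} {w : V}
    (hw : w ∈ lowPiece Z v n) : Y w ∈ lowPiece Z v (n + 1) := by
  suffices h : (lowPiece Z v n).map Y ≤ lowPiece Z v (n + 1) from h (Submodule.mem_map_of_mem hw)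
  rw [lowPiece, Submodule.map_span, Submodule.span_le]
  rintro _ ⟨_, ⟨a, b, h, rfl⟩, rfl⟩
  rw [← Module.End.mul_apply, hYZ.eq, Module.End.mul_apply, hY]
  exact Submodule.subset_span ⟨_, _, by omega, rfl⟩

/-- As `x ≡ -y` modulo `z`, every monomial of degree `n` is `± y ^ n` modulo `z`. -/
theorem monomial_mem (hZ : ∀ a b, Z (v a b) = v (a + 1) b + v a (b + 1)) (a b : ℕ) :
    v a b - (-1 : F) ^ a • v 0 (a + b) ∈ lowPiece Z v (a + b) := by
  induction a generalizing b with
  | zero => simp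
  | succ a ih =>
    have h1 := ih (b + 1)
    have h2 : Z (v a b) ∈ lowPiece Z v (a + b + 1) := Submodule.subset_span ⟨a, b, rfl, rfl⟩
    rw [← add_assoc] at h1
    rw [show a + 1 + b = a + b + 1 by omega]
    convert Submodule.sub_mem _ h2 h1 using 1
    rw [hZ, pow_succ]
    module

/-- The string decomposition for `Z = x + y` on a space with basis the monomials `x ^ a y ^ b`,
`a < r`, `b < s`. The length `d j` is the least `l` such that `z ^ l` kills some element
`e j ∈ y ^ j + z * (degree j - 1)`. It is weakly decreasing because multiplication by `y` carries a
candidate in degree `j` to one in degree `j + 1`. In each degree `n` the nonzero `z ^ (n - j) e j`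
form a basis, which yields the count. -/
theorem exists_strings {r s : ℕ} (hrs : r ≤ s) (hs : 0 < s)
    (hZ : ∀ a b, Z (v a b) = v (a + 1) b + v a (b + 1)) (hY : ∀ a b, Y (v a b) = v a (b + 1))
    (hYZ : Commute Y Z) (hnil : IsNilpotent Z)
    (hv1 : ∀ a b, r ≤ a → v a b = 0) (hv2 : ∀ a b, s ≤ b → v a b = 0)
    (hli : LinearIndependent F (fun x : Fin r × Fin s => v x.1 x.2))
    (hdim : finrank F V = r * s) [FiniteDimensional F V] :
    ∃ d : ℕ → ℕ, Antitone d ∧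
      (∀ n, s ≤ n + 1 → #{j ∈ range r | n < j + d j} = r + s - 1 - n) ∧
      ∀ l, finrank F (LinearMap.range (Z ^ l)) = ∑ j ∈ range r, (d j - l) := by
  classical
  have hex : ∀ j, ∃ l, ∃ w ∈ lowPiece Z v j, (Z ^ l) (v 0 j + w) = 0 := by
    intro j
    obtain ⟨l, hl⟩ := hnil
    exact ⟨l, 0, Submodule.zero_mem _, by simp [hl]⟩
  let d : ℕ → ℕ := fun j => Nat.find (hex j)
  have hd_min : ∀ j l, (∃ w ∈ lowPiece Z v j, (Z ^ l) (v 0 j + w) = 0) → d j ≤ l :=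
    fun j l h => Nat.find_min' (hex j) h
  choose w hw hwz using fun j => Nat.find_spec (hex j)
  change ∀ j, (Z ^ d j) (v 0 j + w j) = 0 at hwz
  set e : ℕ → V := fun j => v 0 j + w j with he
  have hanti : Antitone d := by
    apply antitone_nat_of_succ_le
    intro j
    refine hd_min _ _ ⟨Y (w j), map_lowPiece_le hY hYZ (hw j), ?_⟩
    rw [← hY, ← map_add, ← Module.End.mul_apply, ← (hYZ.pow_right (d j)).eq, Module.End.mul_apply,
      hwz, map_zero]
  -- `x ^ j = 0` for `j ≥ r`, and `± x ^ j` lies in `y ^ j + z * (degree j - 1)`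
  have hdr : ∀ j, r ≤ j → d j = 0 := by
    intro j hj
    have h := monomial_mem (F := F) hZ j 0
    rw [hv1 j 0 hj, zero_sub, add_zero] at h
    apply Nat.le_zero.1
    refine hd_min _ _ ⟨-v 0 j, ?_, by simp⟩
    have h' := Submodule.smul_mem _ ((-1 : F) ^ j) h
    rwa [smul_neg, smul_smul, ← mul_pow, neg_one_mul, neg_neg, one_pow, one_smul] at h'
  have heD : ∀ j, e j ∈ degPiece F v j := fun j =>
    Submodule.add_mem _ (Submodule.subset_span ⟨0, j, by omega, rfl⟩) (lowPiece_le hZ j (hw j))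
  have hkill : ∀ j k, d j ≤ k → (Z ^ k) (e j) = 0 := by
    intro j k h
    rw [← Nat.sub_add_cancel h, pow_add, Module.End.mul_apply, hwz, map_zero]
  have hspan : ∀ n, degPiece F v n ≤
      Submodule.span F ((fun j => (Z ^ (n - j)) (e j)) '' {j | j ≤ n ∧ n < j + d j}) := by
    have hstep : ∀ n, lowPiece Z v n ≤ Submodule.span F
        ((fun j => (Z ^ (n - j)) (e j)) '' {j | j ≤ n ∧ n < j + d j}) → degPiece F v n ≤
        Submodule.span F ((fun j => (Z ^ (n - j)) (e j)) '' {j | j ≤ n ∧ n < j + d j}) := by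
      intro n hn
      have hv0 : v 0 n ∈ Submodule.span F
          ((fun j => (Z ^ (n - j)) (e j)) '' {j | j ≤ n ∧ n < j + d j}) := by
        have : v 0 n = e n - w n := by simp [he]
        rw [this]
        refine Submodule.sub_mem _ ?_ (hn (hw n))
        by_cases h : 0 < d n
        · exact Submodule.subset_span ⟨n, ⟨le_rfl, by omega⟩, by simp⟩
        · have := hkill n 0 (by omega)
          rw [pow_zero, Module.End.one_apply] at this
          rw [this]; exact Submodule.zero_mem _
      rw [degPiece, Submodule.span_le]
      rintro _ ⟨a, b, rfl, rfl⟩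
      have := Submodule.add_mem _ (hn (monomial_mem (F := F) hZ a b))
        (Submodule.smul_mem _ ((-1 : F) ^ a) hv0)
      rwa [sub_add_cancel] at this
    intro n
    induction n with
    | zero =>
      apply hstep
      rw [lowPiece, Submodule.span_le]
      rintro _ ⟨a, b, h, -⟩
      omega
    | succ n ih =>
      apply hstep
      rw [lowPiece_succ]
      refine (Submodule.map_mono ih).trans ?_
      rw [Submodule.map_span, Submodule.span_le]
      rintro _ ⟨_, ⟨j, ⟨hj, -⟩, rfl⟩, rfl⟩
      dsimp only
      rw [← Module.End.mul_apply, ← pow_succ', show n - j + 1 = n + 1 - j by omega]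
      by_cases h : n + 1 < j + d j
      · exact Submodule.subset_span ⟨j, ⟨by omega, h⟩, rfl⟩
      · rw [hkill _ _ (by omega)]; exact Submodule.zero_mem _
  -- a relation whose last term is `z ^ (n - k) e k` would contradict the minimality of `d k`
  have hind : ∀ n k, LinearIndepOn F (fun j => (Z ^ (n - j)) (e j))
      {j | j < k ∧ j ≤ n ∧ n < j + d j} := by
    intro n k
    induction k with
    | zero => simp
    | succ k ih =>
      by_cases hk : k ≤ n ∧ n < k + d k
      · have hset : {j | j < k + 1 ∧ j ≤ n ∧ n < j + d j} =
            insert k {j | j < k ∧ j ≤ n ∧ n < j + d j} := by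
          ext j
          simp only [Set.mem_ofPred_eq, Set.mem_insert_iff]
          constructor
          · rintro ⟨h1, h2⟩
            rcases Nat.lt_succ_iff_lt_or_eq.1 h1 with h | h
            · exact Or.inr ⟨h, h2⟩
            · exact Or.inl h
          · rintro (rfl | ⟨h1, h2⟩)
            · exact ⟨by omega, hk⟩
            · exact ⟨by omega, h2⟩
        rw [hset]
        refine ih.insert fun hmem => ?_
        have hle : Submodule.span F ((fun j => (Z ^ (n - j)) (e j)) ''
            {j | j < k ∧ j ≤ n ∧ n < j + d j}) ≤ (lowPiece Z v k).map (Z ^ (n - k)) := by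
          rw [Submodule.span_le]
          rintro _ ⟨j, ⟨hj, -⟩, rfl⟩
          refine ⟨(Z ^ (k - j)) (e j), ?_, ?_⟩
          · obtain ⟨i, rfl⟩ := Nat.exists_eq_add_of_lt hj
            rw [lowPiece_succ, show j + i + 1 - j = i + 1 by omega, pow_succ',
              Module.End.mul_apply]
            exact Submodule.mem_map_of_mem (pow_mem_degPiece hZ (heD j) i)
          · rw [← Module.End.mul_apply, ← pow_add]
            congr 3
            omega
        obtain ⟨u, hu, hue⟩ := hle hmem
        have := hd_min k (n - k) ⟨w k - u, Submodule.sub_mem _ (hw k) hu, by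
          rw [← add_sub_assoc, map_sub, hue]; exact sub_self _⟩
        omega
      · convert ih using 1
        ext j
        simp only [Set.mem_ofPred_eq]
        constructor
        · rintro ⟨h1, h2⟩
          refine ⟨?_, h2⟩
          rcases Nat.lt_succ_iff_lt_or_eq.1 h1 with h | rfl
          · exact h
          · exact absurd h2 hk
        · rintro ⟨h1, h2⟩
          exact ⟨by omega, h2⟩
  have hcount : ∀ n, s ≤ n + 1 → #{j ∈ range r | n < j + d j} = r + s - 1 - n := by
    intro n hn
    have hset : {j | j < r ∧ j ≤ n ∧ n < j + d j} = ↑({j ∈ range r | n < j + d j} : Finset ℕ) := by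
      ext j
      simp only [Set.mem_ofPred_eq, coe_filter, mem_range]
      omega
    have hset' : {j | j ≤ n ∧ n < j + d j} = ↑({j ∈ range r | n < j + d j} : Finset ℕ) := by
      ext j
      have := hdr j
      simp only [Set.mem_ofPred_eq, coe_filter, mem_range]
      omega
    have hD : degPiece F v n = Submodule.span F (Set.range
        fun j : ({j ∈ range r | n < j + d j} : Finset ℕ) => (Z ^ (n - j)) (e j)) := by
      apply le_antisymm
      · have := hspan n
        rw [hset', Set.image_eq_range] at this
        exact this
      · rw [Submodule.span_le]
        rintro _ ⟨⟨j, hj⟩, rfl⟩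
        simp only [mem_filter, mem_range] at hj
        have := pow_mem_degPiece hZ (heD j) (n - j)
        rwa [Nat.add_sub_cancel' (by omega)] at this
    have hlin := hind n r
    rw [hset] at hlin
    have h1 := finrank_span_eq_card hlin
    rw [← Nat.card_eq_fintype_card, Nat.card_eq_card_toFinset, Finset.toFinset_coe] at h1
    -- the monomials of degree `n` that survive: `x ^ (i + n + 1 - s) y ^ (s - 1 - i)`
    let φ : Fin (r + s - 1 - n) → Fin r × Fin s := fun i =>
      (⟨i + (n + 1 - s), by omega⟩, ⟨s - 1 - i, by omega⟩)
    have hφ : Function.Injective φ := by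
      intro i j h
      simp only [φ, Prod.mk.injEq, Fin.mk.injEq] at h
      exact Fin.ext (by omega)
    have hD' : degPiece F v n = Submodule.span F
        (Set.range ((fun x : Fin r × Fin s => v x.1 x.2) ∘ φ)) := by
      apply le_antisymm <;> rw [degPiece, Submodule.span_le]
      · rintro _ ⟨a, b, rfl, rfl⟩
        by_cases ha : r ≤ a
        · rw [hv1 _ _ ha]; exact Submodule.zero_mem _
        by_cases hb : s ≤ b
        · rw [hv2 _ _ hb]; exact Submodule.zero_mem _
        refine Submodule.subset_span ⟨⟨s - 1 - b, by omega⟩, ?_⟩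
        simp only [φ, Function.comp_apply]
        congr 1 <;> omega
      · rintro _ ⟨i, rfl⟩
        exact Submodule.subset_span ⟨_, _, by simp only [φ]; omega, rfl⟩
    have h2 := finrank_span_eq_card (hli.comp φ hφ)
    rw [← hD', hD, Fintype.card_fin] at h2
    rw [← h1, ← h2]
    rfl
  refine ⟨d, hanti, hcount, fun l => ?_⟩
  have htop : ⊤ ≤ Submodule.span F
      (Set.range fun x : (j : Fin r) × Fin (d j) => (Z ^ (x.2 : ℕ)) (e x.1)) := by
    have hfull := hli.span_eq_top_of_card_eq_finrank' (by simp [hdim])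
    rw [← hfull, Submodule.span_le]
    rintro _ ⟨⟨a, b⟩, rfl⟩
    have h := hspan (a + b) (Submodule.subset_span ⟨a, b, rfl, rfl⟩)
    refine Submodule.span_mono ?_ h
    rintro _ ⟨j, ⟨hj1, hj2⟩, rfl⟩
    have hjr : j < r := by
      have := hdr j
      omega
    exact ⟨⟨⟨j, hjr⟩, ⟨a + b - j, by dsimp only; omega⟩⟩, rfl⟩
  rw [finrank_range_pow_of_strings Z (fun j : Fin r => d j) (fun j a => (Z ^ a) (e j))
    (fun j a h => hkill j a h) (fun j a => by rw [pow_succ', Module.End.mul_apply]) ?_ htop,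
    Fin.sum_univ_eq_sum_range (fun j => d j - l)]
  refine linearIndependent_of_top_le_span_of_card_eq_finrank htop ?_
  rw [hdim, ← sum_eq_mul_of_ends hcount hs, Fintype.card_sigma]
  simp only [Fintype.card_fin]
  exact Fin.sum_univ_eq_sum_range d r

end Strings

/-- `exists_strings` for the monomials `v a b = X ^ a Y ^ b v₀`, with any `v₀` not killed by
`X ^ (r - 1) Y ^ (s - 1)`. -/
theorem exists_strings_of_commute {F V : Type*} [Field F] [AddCommGroup V] [Module F V]
    [FiniteDimensional F V] {X Y : Module.End F V} (hXY : Commute X Y) {r s : ℕ}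
    (hrs : r ≤ s) (hs : 0 < s) (hX : X ^ r = 0) (hY : Y ^ s = 0)
    (hne : X ^ (r - 1) * Y ^ (s - 1) ≠ 0) (hdim : finrank F V = r * s) :
    ∃ d : ℕ → ℕ, Antitone d ∧
      (∀ n, s ≤ n + 1 → #{j ∈ range r | n < j + d j} = r + s - 1 - n) ∧
      ∀ l, finrank F (LinearMap.range ((X + Y) ^ l)) = ∑ j ∈ range r, (d j - l) := by
  obtain ⟨v₀, hv₀⟩ : ∃ v₀, (X ^ (r - 1) * Y ^ (s - 1)) v₀ ≠ 0 := by
    by_contra! h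
    exact hne (LinearMap.ext h)
  have hYv : ∀ a b, Y ((X ^ a * Y ^ b) v₀) = (X ^ a * Y ^ (b + 1)) v₀ := by
    intro a b
    rw [← Module.End.mul_apply, ← mul_assoc, ← (hXY.pow_left a).eq, mul_assoc, ← pow_succ']
  refine exists_strings (Y := Y) (v := fun a b => (X ^ a * Y ^ b) v₀) hrs hs ?_ hYv
    ?_ ?_ ?_ ?_ (linearIndependent_monomials hXY hX hY hv₀) hdim
  · intro a b
    rw [LinearMap.add_apply, hYv, ← Module.End.mul_apply, ← mul_assoc, ← pow_succ']
  · exact hXY.symm.add_right (Commute.refl Y)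
  · exact hXY.isNilpotent_add ⟨r, hX⟩ ⟨s, hY⟩
  · intro a b h
    simp [pow_eq_zero_of_le h hX]
  · intro a b h
    simp [pow_eq_zero_of_le h hY]

/-! ### Jordan blocks -/

/-- The nilpotent part `J_m - 1` of the Jordan block: ones on the superdiagonal only. -/
def shiftMat (F : Type*) [Field F] (m : ℕ) : Matrix (Fin m) (Fin m) F :=
  jordanBlock F m - 1

theorem shiftMat_apply (F : Type*) [Field F] (m : ℕ) (i j : Fin m) :
    shiftMat F m i j = if (j : ℕ) = i + 1 then 1 else 0 := by
  simp only [shiftMat, jordanBlock, Matrix.sub_apply, Matrix.of_apply, Matrix.one_apply, Fin.ext_iff]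
  split_ifs <;> first | omega | simp

theorem shiftMat_pow_apply (F : Type*) [Field F] (m k : ℕ) (i j : Fin m) :
    (shiftMat F m ^ k) i j = if (j : ℕ) = i + k then 1 else 0 := by
  induction k generalizing i with
  | zero => simp [Matrix.one_apply, Fin.ext_iff, eq_comm]
  | succ k ih =>
    rw [pow_succ', Matrix.mul_apply]
    simp only [ih, shiftMat_apply]
    by_cases h : (i : ℕ) + 1 < m
    · rw [Finset.sum_eq_single ⟨i + 1, h⟩]
      · simp [add_assoc, add_comm 1 k]
      · intro b _ hb
        rw [if_neg (fun h' => hb (Fin.ext h')), zero_mul]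
      · simp
    · rw [if_neg (by omega)]
      apply Finset.sum_eq_zero
      intro b _
      rw [if_neg (by omega), zero_mul]

theorem shiftMat_pow_self (F : Type*) [Field F] (m : ℕ) : shiftMat F m ^ m = 0 := by
  ext i j
  rw [shiftMat_pow_apply, if_neg (by omega), Matrix.zero_apply]

theorem jordanBlock_mul_shiftMat_pow (F : Type*) [Field F] {m : ℕ} (hm : 0 < m) (k : ℕ) :
    jordanBlock F m ^ k * shiftMat F m ^ (m - 1) = shiftMat F m ^ (m - 1) := by
  induction k with
  | zero => simp
  | succ k ih =>
    rw [pow_succ, mul_assoc]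
    have : jordanBlock F m = shiftMat F m + 1 := by simp [shiftMat]
    rw [show jordanBlock F m * shiftMat F m ^ (m - 1) = shiftMat F m ^ (m - 1) by
      rw [this, add_mul, ← pow_succ', Nat.sub_add_cancel hm, shiftMat_pow_self, zero_add, one_mul],
      ih]

theorem kronecker_pow' {F : Type*} [Field F] {r s : ℕ} (A : Matrix (Fin r) (Fin r) F)
    (B : Matrix (Fin s) (Fin s) F) (k : ℕ) : (A ⊗ₖ B) ^ k = (A ^ k) ⊗ₖ (B ^ k) := by
  induction k with
  | zero => simp
  | succ k ih => rw [pow_succ, ih, ← Matrix.mul_kronecker_mul, ← pow_succ, ← pow_succ]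

/-- `J_r ⊗ J_s - 1 = N_r ⊗ J_s + 1 ⊗ N_s` with `N = J - 1`, a sum of commuting nilpotent matrices
to which `exists_strings_of_commute` applies. Here `r' = min r s` and `s' = max r s`. -/
theorem exists_strings_kronecker (F : Type*) [Field F] {r s : ℕ} (hr : 0 < r) (hs : 0 < s) :
    ∃ r' s' : ℕ, 0 < r' ∧ r' ≤ s' ∧ r' + s' = r + s ∧ ∃ d : ℕ → ℕ, Antitone d ∧
      (∀ n, s' ≤ n + 1 → #{j ∈ range r' | n < j + d j} = r' + s' - 1 - n) ∧
      ∀ l, finrank F (LinearMap.range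
        (Matrix.toLin' (jordanBlock F r ⊗ₖ jordanBlock F s - 1) ^ l)) =
        ∑ j ∈ range r', (d j - l) := by
  set A : Matrix (Fin r × Fin s) (Fin r × Fin s) F := shiftMat F r ⊗ₖ jordanBlock F s with hA
  set B : Matrix (Fin r × Fin s) (Fin r × Fin s) F :=
    (1 : Matrix (Fin r) (Fin r) F) ⊗ₖ shiftMat F s with hB
  have hAB : A * B = B * A := by
    rw [hA, hB, ← Matrix.mul_kronecker_mul, ← Matrix.mul_kronecker_mul]
    simp [shiftMat, mul_sub, sub_mul]
  have hsum : jordanBlock F r ⊗ₖ jordanBlock F s - 1 = A + B := by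
    have hJr : jordanBlock F r = shiftMat F r + 1 := by simp [shiftMat]
    have hJs : (1 : Matrix (Fin r) (Fin r) F) ⊗ₖ jordanBlock F s = B + 1 := by
      rw [hB, show jordanBlock F s = shiftMat F s + 1 by simp [shiftMat], Matrix.kronecker_add,
        Matrix.one_kronecker_one]
    rw [hJr, Matrix.add_kronecker, hJs, ← add_assoc, add_sub_cancel_right]
  have hAr : A ^ r = 0 := by rw [hA, kronecker_pow', shiftMat_pow_self, Matrix.zero_kronecker]
  have hBs : B ^ s = 0 := by rw [hB, kronecker_pow', shiftMat_pow_self, Matrix.kronecker_zero]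
  -- `A ^ (r - 1) * B ^ (s - 1) = N_r ^ (r - 1) ⊗ N_s ^ (s - 1)`, whose top right entry is `1`
  have hne : A ^ (r - 1) * B ^ (s - 1) ≠ 0 := by
    rw [hA, hB, kronecker_pow', kronecker_pow', ← Matrix.mul_kronecker_mul, one_pow, mul_one,
      jordanBlock_mul_shiftMat_pow F hs]
    intro h
    have h' := congrFun (congrFun h (⟨0, hr⟩, ⟨0, hs⟩)) (⟨r - 1, by omega⟩, ⟨s - 1, by omega⟩)
    simp [shiftMat_pow_apply] at h'
  let T := Matrix.toLinAlgEquiv' (R := F) (n := Fin r × Fin s)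
  have hT : Matrix.toLin' (jordanBlock F r ⊗ₖ jordanBlock F s - 1) = T A + T B := by
    rw [hsum, ← map_add]; rfl
  have hcomm : Commute (T A) (T B) := by
    rw [Commute, SemiconjBy, ← map_mul, hAB, map_mul]
  have hTA : T A ^ r = 0 := by rw [← map_pow, hAr, map_zero]
  have hTB : T B ^ s = 0 := by rw [← map_pow, hBs, map_zero]
  have hTne : T A ^ (r - 1) * T B ^ (s - 1) ≠ 0 := by
    rw [← map_pow, ← map_pow, ← map_mul]
    exact fun h => hne (T.injective (h.trans (map_zero T).symm))
  have hdim : finrank F (Fin r × Fin s → F) = r * s := by simp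
  rw [hT]
  rcases le_total r s with h | h
  · exact ⟨r, s, hr, h, rfl, exists_strings_of_commute hcomm h hs hTA hTB hTne hdim⟩
  · rw [add_comm (T A)]
    exact ⟨s, r, hs, h, add_comm _ _, exists_strings_of_commute hcomm.symm h hr hTB hTA
      (by rwa [← (hcomm.pow_pow _ _).eq]) (by rw [hdim, mul_comm])⟩

theorem finrank_range_jordanBlockDiag (F : Type*) [Field F] {ι : Type} [DecidableEq ι] [Fintype ι]
    (d : ι → ℕ) (l : ℕ) :
    finrank F (LinearMap.range (Matrix.toLin' (jordanBlockDiag F d - 1) ^ l)) =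
      ∑ i, (d i - l) := by
  -- the string of block `i` starts at the last basis vector of the block and moves down
  let g : ι → ℕ → ((i : ι) × Fin (d i)) → F := fun i a =>
    if h : a < d i then Pi.single ⟨i, Fin.rev ⟨a, h⟩⟩ 1 else 0
  have hN : jordanBlockDiag F d - 1 = Matrix.blockDiagonal' fun i => shiftMat F (d i) := by
    rw [jordanBlockDiag, ← Matrix.blockDiagonal'_one, ← Matrix.blockDiagonal'_sub]
    rfl
  let ρ : ((i : ι) × Fin (d i)) ≃ ((i : ι) × Fin (d i)) := Equiv.sigmaCongrRight fun i => Fin.revPerm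
  have hgb : (fun x : (i : ι) × Fin (d i) => g x.1 x.2) = (Pi.basisFun F _).reindex ρ.symm := by
    ext1 ⟨i, a⟩
    simp [g, ρ]
  refine finrank_range_pow_of_strings _ d g (fun i a h => dif_neg (not_lt.2 h)) ?_ ?_ ?_ l
  · intro i a
    by_cases h : a < d i
    · simp only [g, dif_pos h, Matrix.toLin'_apply, Matrix.mulVec_single_one, hN]
      ext ⟨k, b⟩
      rw [Matrix.col_apply]
      by_cases hk : k = i
      · subst hk
        rw [Matrix.blockDiagonal'_apply_eq, shiftMat_apply]
        split_ifs with h1 h2 h2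
        · rw [show b = Fin.rev ⟨a + 1, h2⟩ by
            ext; simp only [Fin.val_rev] at h1 ⊢; omega, Pi.single_eq_same]
        · simp only [Fin.val_rev] at h1; omega
        · rw [Pi.single_eq_of_ne]
          intro h3
          simp only [Sigma.mk.injEq, heq_eq_eq, true_and] at h3
          subst h3
          simp only [Fin.val_rev] at h1; omega
        · rfl
      · rw [Matrix.blockDiagonal'_apply_ne _ _ _ hk]
        split_ifs
        · rw [Pi.single_eq_of_ne]
          intro h3
          simp only [Sigma.mk.injEq] at h3
          exact hk h3.1
        · rfl
    · simp only [g, dif_neg h, dif_neg (show ¬ a + 1 < d i by omega), map_zero]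
  · rw [hgb]; exact Basis.linearIndependent _
  · rw [hgb]; exact (Basis.span_eq _).ge

theorem finrank_range_of_matSimilar {F : Type*} [Field F] {n m : Type*} [Fintype n] [Fintype m]
    [DecidableEq n] [DecidableEq m] {A : Matrix n n F} {B : Matrix m m F} (h : MatSimilar F A B)
    (l : ℕ) : finrank F (LinearMap.range (Matrix.toLin' (A - 1) ^ l)) =
      finrank F (LinearMap.range (Matrix.toLin' (B - 1) ^ l)) := by
  obtain ⟨e, he⟩ := h
  have hpow : ∀ v, e ((Matrix.toLin' (A - 1) ^ l) v) = (Matrix.toLin' (B - 1) ^ l) (e v) := by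
    induction l with
    | zero => simp
    | succ l ih =>
      intro v
      rw [pow_succ', pow_succ', Module.End.mul_apply, Module.End.mul_apply, ← ih]
      simp [Matrix.toLin'_apply, he]
  have hmap : (LinearMap.range (Matrix.toLin' (A - 1) ^ l)).map (e : (n → F) →ₗ[F] (m → F)) =
      LinearMap.range (Matrix.toLin' (B - 1) ^ l) := by
    ext x
    simp only [Submodule.mem_map, LinearMap.mem_range]
    constructor
    · rintro ⟨_, ⟨v, rfl⟩, rfl⟩; exact ⟨e v, (hpow v).symm⟩
    · rintro ⟨v, rfl⟩
      exact ⟨_, ⟨e.symm v, rfl⟩, by rw [LinearEquiv.coe_coe, hpow, e.apply_symm_apply]⟩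
  rw [← hmap]
  exact (LinearEquiv.finrank_map_eq e _).symm

/-! ### The recurrence -/

/-- The number of indices with `d i = l` is a second difference of `l ↦ ∑ (d i - l)⁺`; the
truncated subtraction is intended. -/
theorem card_eq_second_difference {ι : Type*} (S : Finset ι) (d : ι → ℕ) {l : ℕ} (hl : 0 < l) :
    #{i ∈ S | d i = l} + 2 * ∑ i ∈ S, (d i - l) =
      ∑ i ∈ S, (d i - (l - 1)) + ∑ i ∈ S, (d i - (l + 1)) := by
  rw [card_filter, mul_sum, ← sum_add_distrib, ← sum_add_distrib]
  apply sum_congr rfl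
  intro i _
  split_ifs <;> omega

/-- McFall's recurrence: `m₁ = r + s − μ₁` and `m_i = μ_{i−1} − μ_i − m_{i−1}` for `2 ≤ i ≤ t`. -/
theorem stmt_3 {F : Type*} [Field F] (p : ℕ) (hp : p.Prime) [CharP F p]
    (r s : ℕ) (hr : 0 < r) (hs : 0 < s)
    (t : ℕ) (μ : Fin t → ℕ) (m : Fin t → ℕ)
    (hμ : StrictAnti μ) (hμpos : ∀ i, 0 < μ i) (hm : ∀ i, 1 ≤ m i)
    (hsim : MatSimilar F (jordanBlock F r ⊗ₖ jordanBlock F s)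
      (jordanBlockDiag F (fun x : (i : Fin t) × Fin (m i) => μ x.1))) :
    (∀ ht : 0 < t, (m ⟨0, ht⟩ : ℤ) = (r : ℤ) + s - μ ⟨0, ht⟩) ∧
    (∀ i : Fin t, ∀ h : (i : ℕ) + 1 < t,
      (m ⟨(i : ℕ) + 1, h⟩ : ℤ) = (μ i : ℤ) - μ ⟨(i : ℕ) + 1, h⟩ - m i) := by
  obtain ⟨r', s', hr', hle, hrs, d, hd, hcount, hrank⟩ := exists_strings_kronecker F hr hs
  have hs' : 0 < s' := hr'.trans_le hle
  have hranks : ∀ l, ∑ j ∈ range r', (d j - l) =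
      ∑ x : (i : Fin t) × Fin (m i), (μ x.1 - l) := fun l => by
    rw [← hrank, finrank_range_of_matSimilar hsim, finrank_range_jordanBlockDiag]
  have hcard : ∀ l, 0 < l → #{j ∈ range r' | d j = l} =
      #{x : (i : Fin t) × Fin (m i) | μ x.1 = l} := by
    intro l hl
    have h1 := card_eq_second_difference (range r') d hl
    have h2 := card_eq_second_difference univ (fun x : (i : Fin t) × Fin (m i) => μ x.1) hl
    simp only [hranks] at h1
    omega
  have hmult : ∀ i, #{j ∈ range r' | d j = μ i} = m i := by
    intro i
    rw [hcard _ (hμpos i), card_filter, Fintype.sum_sigma, Finset.sum_eq_single i]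
    · simp
    · intro k _ hk
      simp [hμ.injective.ne hk]
    · simp
  have hocc : ∀ i, ∃ j < r', d j = μ i := by
    intro i
    obtain ⟨j, hj⟩ := card_pos.1 (by rw [hmult i]; exact hm i)
    simp only [mem_filter, mem_range] at hj
    exact ⟨j, hj⟩
  -- the lengths are positive because `j + d j ≥ s' ≥ r' > j`
  have hpart : ∀ j < r', ∃ i, d j = μ i := by
    intro j hj
    have hpos : 0 < d j := by
      have := ((ends_bij hcount hs').1 j hj).1
      omega
    have h2 : 0 < #{k ∈ range r' | d k = d j} := card_pos.2 ⟨j, by simp [hj]⟩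
    rw [hcard _ hpos] at h2
    obtain ⟨x, hx⟩ := card_pos.1 h2
    exact ⟨x.1, by simpa [eq_comm] using hx⟩
  constructor
  · intro ht
    have := card_max_part hd hr' hs' hcount (c := μ ⟨0, ht⟩) (fun j hj => by
      obtain ⟨i, hi⟩ := hpart j hj
      rw [hi]
      exact hμ.antitone (Fin.mk_le_of_le_val (Nat.zero_le _))) (hocc _)
    rw [hmult] at this
    omega
  · intro i h
    have := card_consecutive_parts hd hs' hcount (c := μ i) (c' := μ ⟨i + 1, h⟩)
      (hμ (Fin.lt_def.2 (Nat.lt_succ_self _))) (hocc _) (hocc _) (fun j hj hlt => by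
        obtain ⟨k, hk⟩ := hpart j hj
        rw [hk] at hlt ⊢
        exact hμ.antitone (Fin.le_def.2 (Nat.succ_le_of_lt (Fin.lt_def.1 (hμ.lt_iff_gt.1 hlt)))))
    rw [hmult, hmult] at this
    omega
end
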